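/- arXiv:1710.10950 — 10 statements merged into one kernel-verified Lean document; each statement's English description precedes it below -/
import Mathlib

section
/- Let g be a finite-dimensional real Lie algebra with an abelian complex structure J. For every m ≥ 0, the subspace g_J^m = g^m + J(g^m), where g^m is the m-th term of the lower central series, satisfies [g_J^m, g] ⊆ g^{m+1}; in particular each g_J^m is a J-invariant ideal of g, and these ideals form a decreasing filtration g = g_J^0 ⊇ g_J^1 ⊇ g_J^2 ⊇ ⋯. -/
open scoped TensorProduct

noncomputable section

/-- The `c`-eigenspace of the ℂ-linear extension of `J` on the complexification `ℂ ⊗[ℝ] g`. -/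
def eig (g : Type) [LieRing g] [LieAlgebra ℝ g] (J : g →ₗ[ℝ] g) (c : ℂ) :
    Submodule ℂ (ℂ ⊗[ℝ] g) where
  carrier := {x | J.baseChange ℂ x = c • x}
  add_mem' := by
    intro a b ha hb
    simp only [Set.mem_setOf_eq, map_add] at *
    rw [ha, hb, smul_add]
  zero_mem' := by simp
  smul_mem' := by
    intro t x hx
    simp only [Set.mem_setOf_eq, map_smul] at *
    rw [hx, smul_comm]

/-- The lower central series: `lcs g 0 = g`, `lcs g (m+1) = [lcs g m, g]`. -/
def lcs (g : Type) [LieRing g] [LieAlgebra ℝ g] : ℕ → Submodule ℝ g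
  | 0 => ⊤
  | m + 1 => Submodule.span ℝ {x : g | ∃ a ∈ lcs g m, ∃ b : g, ⁅a, b⁆ = x}

/-- `g_J^m = g^m + J(g^m)`. -/
def gJ (g : Type) [LieRing g] [LieAlgebra ℝ g] (J : g →ₗ[ℝ] g) (m : ℕ) : Submodule ℝ g :=
  lcs g m ⊔ Submodule.map J (lcs g m)

/-- Complexification of a real subspace of `g`, inside `ℂ ⊗[ℝ] g`. -/
def cxS (g : Type) [LieRing g] [LieAlgebra ℝ g] (p : Submodule ℝ g) :
    Submodule ℂ (ℂ ⊗[ℝ] g) := p.baseChange ℂ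

/-- `g_J^{m,(1,0)}`. -/
def gJ10 (g : Type) [LieRing g] [LieAlgebra ℝ g] (J : g →ₗ[ℝ] g) (m : ℕ) :
    Submodule ℂ (ℂ ⊗[ℝ] g) := cxS g (gJ g J m) ⊓ eig g J Complex.I

/-- `g_J^{m,(0,1)}`. -/
def gJ01 (g : Type) [LieRing g] [LieAlgebra ℝ g] (J : g →ₗ[ℝ] g) (m : ℕ) :
    Submodule ℂ (ℂ ⊗[ℝ] g) := cxS g (gJ g J m) ⊓ eig g J (-Complex.I)

/-- The center of `g`, as a submodule. -/
def centerS (g : Type) [LieRing g] [LieAlgebra ℝ g] : Submodule ℝ g where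
  carrier := {A | ∀ B : g, ⁅A, B⁆ = 0}
  add_mem' := by
    intro a b ha hb B
    rw [add_lie, ha B, hb B, add_zero]
  zero_mem' := fun B => zero_lie B
  smul_mem' := by
    intro c a ha B
    rw [smul_lie, ha B, smul_zero]

/-- Complex conjugation on the complexification `ℂ ⊗[ℝ] g` (an ℝ-linear map). -/
def conjC (g : Type) [AddCommGroup g] [Module ℝ g] :
    ℂ ⊗[ℝ] g →ₗ[ℝ] ℂ ⊗[ℝ] g :=
  LinearMap.rTensor g Complex.conjAe.toLinearMap

/-- For an abelian complex structure `J`, the subspace `g_J^m = g^m + J(g^m)`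
satisfies `[g_J^m, g] ⊆ g^{m+1}`; in particular each `g_J^m` is a `J`-invariant ideal of `g`,
and the `g_J^m` form a decreasing filtration. -/
theorem statement2 (g : Type) [LieRing g] [LieAlgebra ℝ g] [FiniteDimensional ℝ g]
    (J : g →ₗ[ℝ] g) (hJ2 : ∀ v : g, J (J v) = -v)
    (hab : ∀ A B : g, ⁅J A, J B⁆ = ⁅A, B⁆) (m : ℕ) :
    (∀ x ∈ gJ g J m, ∀ y : g, ⁅x, y⁆ ∈ lcs g (m + 1)) ∧
    (∀ x ∈ gJ g J m, J x ∈ gJ g J m) ∧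
    (∀ x ∈ gJ g J m, ∀ y : g, ⁅x, y⁆ ∈ gJ g J m) ∧
    gJ g J (m + 1) ≤ gJ g J m := by
  have h1 : ∀ x ∈ gJ g J m, ∀ y : g, ⁅x, y⁆ ∈ lcs g (m + 1) := by
    intro x hx y
    obtain ⟨a, ha, b, hb, rfl⟩ := Submodule.mem_sup.mp hx
    obtain ⟨c, hc, rfl⟩ := Submodule.mem_map.mp hb
    have h2 : ⁅J c, y⁆ = -⁅c, J y⁆ := by
      rw [← hab (J c) y, hJ2, neg_lie]
    rw [add_lie, h2]
    exact Submodule.add_mem _ (Submodule.subset_span ⟨a, ha, y, rfl⟩)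
      (Submodule.neg_mem _ (Submodule.subset_span ⟨c, hc, J y, rfl⟩))
  have hdec : ∀ k : ℕ, lcs g (k + 1) ≤ lcs g k := by
    intro k
    induction k with
    | zero => exact le_top
    | succ k ih =>
      refine Submodule.span_le.mpr ?_
      rintro x ⟨a, ha, b, rfl⟩
      exact Submodule.subset_span ⟨a, ih ha, b, rfl⟩
  refine ⟨h1, ?_, ?_, ?_⟩
  · intro x hx
    obtain ⟨a, ha, b, hb, rfl⟩ := Submodule.mem_sup.mp hx
    obtain ⟨c, hc, rfl⟩ := Submodule.mem_map.mp hb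
    rw [map_add, hJ2]
    exact Submodule.add_mem _ (Submodule.mem_sup_right (Submodule.mem_map_of_mem ha))
      (Submodule.mem_sup_left (Submodule.neg_mem _ hc))
  · intro x hx y
    exact Submodule.mem_sup_left (hdec m (h1 x hx y))
  · exact sup_le_sup (hdec m) (Submodule.map_mono (hdec m))
end
end

section
/- Let g be a k-step nilpotent finite-dimensional real Lie algebra (g^k = {0}, g^{k−1} ≠ {0}) with an abelian complex structure J. Then g_J^{k−1} = g^{k−1} + J(g^{k−1}) is contained in the center of g. -/
open scoped TensorProduct

noncomputable section

/-- If `g` is `k`-step nilpotent with an abelian complex structure `J`, then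
`g_J^{k-1} = g^{k-1} + J(g^{k-1})` is contained in the center of `g`. -/
theorem statement3 (g : Type) [LieRing g] [LieAlgebra ℝ g] [FiniteDimensional ℝ g]
    (J : g →ₗ[ℝ] g) (hJ2 : ∀ v : g, J (J v) = -v)
    (hab : ∀ A B : g, ⁅J A, J B⁆ = ⁅A, B⁆)
    (k : ℕ) (hk : 1 ≤ k) (hstep : lcs g k = ⊥) (hstep' : lcs g (k - 1) ≠ ⊥) :
    ∀ x ∈ gJ g J (k - 1), ∀ B : g, ⁅x, B⁆ = 0 := by
  have key : ∀ a ∈ lcs g (k - 1), ∀ B : g, ⁅a, B⁆ = 0 := by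
    intro a ha B
    obtain ⟨m, rfl⟩ : ∃ m, k = m + 1 := ⟨k - 1, by omega⟩
    have h : ⁅a, B⁆ ∈ lcs g (m + 1) := Submodule.subset_span ⟨a, ha, B, rfl⟩
    rw [hstep] at h
    exact (Submodule.mem_bot ℝ).1 h
  intro x hx B
  obtain ⟨y, hy, z, hz, rfl⟩ := Submodule.mem_sup.1 hx
  obtain ⟨w, hw, rfl⟩ := Submodule.mem_map.1 hz
  rw [add_lie, key y hy, ← hab (J w) B, hJ2, neg_lie, key w hw, neg_zero, add_zero]
end
end

section
/- Let g be a finite-dimensional real Lie algebra with an abelian complex structure J. For all a, b ≥ 0, the complexified Lie bracket satisfies [g_J^{a,(1,0)}, g_J^{b,(0,1)}] ⊆ g_{J,ℂ}^{1+max(a,b)}. In particular (taking b = 0), [g_J^{a,(1,0)}, g^{0,1}] ⊆ g_{J,ℂ}^{a+1}. -/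
open scoped TensorProduct

noncomputable section

theorem lie_gJ_mem (g : Type) [LieRing g] [LieAlgebra ℝ g]
    (J : g →ₗ[ℝ] g) (hJ2 : ∀ v : g, J (J v) = -v)
    (hab : ∀ A B : g, ⁅J A, J B⁆ = ⁅A, B⁆) (a : ℕ) (u : g) (hu : u ∈ gJ g J a) (v : g) :
    ⁅u, v⁆ ∈ gJ g J (a + 1) := by
  have key : ∀ w ∈ lcs g a, ∀ v : g, ⁅w, v⁆ ∈ lcs g (a + 1) := fun w hw v =>
    Submodule.subset_span ⟨w, hw, v, rfl⟩
  apply Submodule.mem_sup_left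
  obtain ⟨p, hp, q, hq, rfl⟩ := Submodule.mem_sup.1 hu
  obtain ⟨r, hr, rfl⟩ := Submodule.mem_map.1 hq
  rw [add_lie]
  refine Submodule.add_mem _ (key p hp v) ?_
  rw [← hab (J r) v, hJ2, neg_lie]
  exact Submodule.neg_mem _ (key r hr _)

theorem lie_cxS_mem (g : Type) [LieRing g] [LieAlgebra ℝ g] (p q : Submodule ℝ g)
    (h : ∀ u ∈ p, ∀ v : g, ⁅u, v⁆ ∈ q) (x y : ℂ ⊗[ℝ] g) (hx : x ∈ cxS g p) :
    ⁅x, y⁆ ∈ cxS g q := by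
  unfold cxS at hx
  rw [Submodule.baseChange_eq_span] at hx
  induction hx using Submodule.span_induction with
  | mem x hx =>
    obtain ⟨u, hu, rfl⟩ := hx
    induction y using TensorProduct.induction_on with
    | zero => have e := lie_zero (M := ℂ ⊗[ℝ] g) (TensorProduct.mk ℝ ℂ g 1 u); exact e ▸ Submodule.zero_mem _
    | add y z hy hz => 
      have e := lie_add (TensorProduct.mk ℝ ℂ g 1 u) y z
      exact e ▸ Submodule.add_mem _ hy hz
    | tmul c v =>
      simp only [TensorProduct.mk_apply, LieAlgebra.ExtendScalars.bracket_tmul]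
      exact Submodule.tmul_mem_baseChange_of_mem _ (h u hu v)
  | zero => rw [zero_lie]; exact Submodule.zero_mem _
  | add x z _ _ hx hz => rw [add_lie]; exact Submodule.add_mem _ hx hz
  | smul c x _ hx => rw [smul_lie]; exact Submodule.smul_mem _ c hx

/-- For an abelian complex structure,
`[g_J^{a,(1,0)}, g_J^{b,(0,1)}] ⊆ g_{J,ℂ}^{1+max(a,b)}`; in particular (`b = 0`)
`[g_J^{a,(1,0)}, g^{0,1}] ⊆ g_{J,ℂ}^{a+1}`. -/
theorem statement4 (g : Type) [LieRing g] [LieAlgebra ℝ g] [FiniteDimensional ℝ g]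
    (J : g →ₗ[ℝ] g) (hJ2 : ∀ v : g, J (J v) = -v)
    (hab : ∀ A B : g, ⁅J A, J B⁆ = ⁅A, B⁆) (a b : ℕ) :
    (∀ x ∈ gJ10 g J a, ∀ y ∈ gJ01 g J b, ⁅x, y⁆ ∈ cxS g (gJ g J (1 + max a b))) ∧
    (∀ x ∈ gJ10 g J a, ∀ y ∈ eig g J (-Complex.I), ⁅x, y⁆ ∈ cxS g (gJ g J (a + 1))) := by
  have key : ∀ (c : ℕ) (x y : ℂ ⊗[ℝ] g), x ∈ cxS g (gJ g J c) →
      ⁅x, y⁆ ∈ cxS g (gJ g J (c + 1)) := fun c x y hx =>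
    lie_cxS_mem g _ _ (lie_gJ_mem g J hJ2 hab c) x y hx
  refine ⟨fun x hx y hy => ?_, fun x hx y _ => key a x y hx.1⟩
  rw [add_comm]
  rcases le_total b a with h | h
  · rw [max_eq_left h]
    exact key a x y hx.1
  · rw [max_eq_right h, ← lie_skew]
    exact Submodule.neg_mem _ (key b y x hy.1)
end
end

section
/- Let g be a finite-dimensional real Lie algebra with an abelian complex structure J, and let a ≥ 0. Suppose ω̄ : g_ℂ → ℂ is a ℂ-linear functional that vanishes on g^{1,0} and on g_J^{a+1,(0,1)}. Then for every V ∈ g_J^{a,(1,0)} and every Ȳ ∈ g^{0,1}, one has ω̄([V, Ȳ]) = 0. (This is the contraction statement that the Schouten bracket [V, ω̄] = ι_V dω̄ vanishes whenever ω̄ is an invariant (0,1)-form annihilating g_J^{a+1,(0,1)}.) -/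
open scoped TensorProduct

noncomputable section

theorem gJ_bracket (g : Type) [LieRing g] [LieAlgebra ℝ g]
    (J : g →ₗ[ℝ] g) (hJ2 : ∀ v : g, J (J v) = -v)
    (hab : ∀ A B : g, ⁅J A, J B⁆ = ⁅A, B⁆) (a : ℕ) (x : g) (hx : x ∈ gJ g J a) (y : g) :
    ⁅x, y⁆ ∈ gJ g J (a + 1) := by
  apply Submodule.mem_sup_left
  obtain ⟨A, hA, _, ⟨B, hB, rfl⟩, rfl⟩ := Submodule.mem_sup.1 hx
  have h : ⁅J B, y⁆ = -⁅B, J y⁆ := by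
    rw [← hab (J B) y, hJ2, neg_lie]
  rw [add_lie, h]
  exact add_mem (Submodule.subset_span ⟨A, hA, y, rfl⟩)
    (neg_mem (Submodule.subset_span ⟨B, hB, J y, rfl⟩))

theorem gJ_stable (g : Type) [LieRing g] [LieAlgebra ℝ g]
    (J : g →ₗ[ℝ] g) (hJ2 : ∀ v : g, J (J v) = -v) (a : ℕ) (x : g) (hx : x ∈ gJ g J a) :
    J x ∈ gJ g J a := by
  obtain ⟨A, hA, _, ⟨B, hB, rfl⟩, rfl⟩ := Submodule.mem_sup.1 hx
  rw [map_add, hJ2, add_comm]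
  exact Submodule.add_mem_sup (neg_mem hB) ⟨A, hA, rfl⟩

theorem cx_stable (g : Type) [LieRing g] [LieAlgebra ℝ g]
    (J : g →ₗ[ℝ] g) (hJ2 : ∀ v : g, J (J v) = -v) (a : ℕ) (Z : ℂ ⊗[ℝ] g)
    (hZ : Z ∈ cxS g (gJ g J a)) : J.baseChange ℂ Z ∈ cxS g (gJ g J a) := by
  unfold cxS at hZ ⊢
  rw [Submodule.baseChange_eq_span] at hZ
  induction hZ using Submodule.span_induction with
  | mem x hx =>
    obtain ⟨x, hx, rfl⟩ := hx
    simpa using Submodule.tmul_mem_baseChange_of_mem (1 : ℂ) (gJ_stable g J hJ2 a x hx)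
  | zero => simp
  | add x y _ _ hx hy => rw [map_add]; exact add_mem hx hy
  | smul c x _ hx => rw [map_smul]; exact Submodule.smul_mem _ c hx

theorem cx_bracket (g : Type) [LieRing g] [LieAlgebra ℝ g]
    (J : g →ₗ[ℝ] g) (hJ2 : ∀ v : g, J (J v) = -v)
    (hab : ∀ A B : g, ⁅J A, J B⁆ = ⁅A, B⁆) (a : ℕ) (V : ℂ ⊗[ℝ] g)
    (hV : V ∈ cxS g (gJ g J a)) (Y : ℂ ⊗[ℝ] g) : ⁅V, Y⁆ ∈ cxS g (gJ g J (a + 1)) := by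
  unfold cxS at hV ⊢
  rw [Submodule.baseChange_eq_span] at hV
  induction hV using Submodule.span_induction with
  | mem x hx =>
    obtain ⟨x, hx, rfl⟩ := hx
    induction Y using TensorProduct.induction_on with
    | zero =>
      have e : ⁅(TensorProduct.mk ℝ ℂ g) 1 x, (0 : ℂ ⊗[ℝ] g)⁆ = 0 :=
        lie_zero (L := ℂ ⊗[ℝ] g) (M := ℂ ⊗[ℝ] g) _
      exact e ▸ zero_mem _
    | tmul c y =>
      have := Submodule.tmul_mem_baseChange_of_mem (1 * c : ℂ) (gJ_bracket g J hJ2 hab a x hx y)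
      simpa using this
    | add y z hy hz =>
      have e : ⁅(TensorProduct.mk ℝ ℂ g) 1 x, y + z⁆ = ⁅(TensorProduct.mk ℝ ℂ g) 1 x, y⁆
        + ⁅(TensorProduct.mk ℝ ℂ g) 1 x, z⁆ :=
        lie_add (L := ℂ ⊗[ℝ] g) (M := ℂ ⊗[ℝ] g) _ _ _
      rw [e]; exact add_mem hy hz
  | zero => simp
  | add x y _ _ hx hy => rw [add_lie]; exact add_mem hx hy
  | smul c x _ hx => rw [smul_lie]; exact Submodule.smul_mem _ c hx

theorem J_sq (g : Type) [LieRing g] [LieAlgebra ℝ g]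
    (J : g →ₗ[ℝ] g) (hJ2 : ∀ v : g, J (J v) = -v) (Z : ℂ ⊗[ℝ] g) :
    J.baseChange ℂ (J.baseChange ℂ Z) = -Z := by
  induction Z using TensorProduct.induction_on with
  | zero => simp
  | tmul c y => simp [hJ2, TensorProduct.tmul_neg]
  | add y z hy hz => rw [map_add, map_add, hy, hz, neg_add]

/-- If the ℂ-linear functional `ω̄` on `g_ℂ` vanishes on `g^{1,0}` and on
`g_J^{a+1,(0,1)}`, then `ω̄([V, Ȳ]) = 0` for every `V ∈ g_J^{a,(1,0)}` and `Ȳ ∈ g^{0,1}`. -/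
theorem statement5 (g : Type) [LieRing g] [LieAlgebra ℝ g] [FiniteDimensional ℝ g]
    (J : g →ₗ[ℝ] g) (hJ2 : ∀ v : g, J (J v) = -v)
    (hab : ∀ A B : g, ⁅J A, J B⁆ = ⁅A, B⁆) (a : ℕ)
    (ω : (ℂ ⊗[ℝ] g) →ₗ[ℂ] ℂ)
    (hω10 : ∀ x ∈ eig g J Complex.I, ω x = 0)
    (hω01 : ∀ x ∈ gJ01 g J (a + 1), ω x = 0) :
    ∀ V ∈ gJ10 g J a, ∀ Y ∈ eig g J (-Complex.I), ω ⁅V, Y⁆ = 0 := by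
  intro V hV Y _
  have hZ := cx_bracket g J hJ2 hab a V hV.1 Y
  generalize ⁅V, Y⁆ = Z at hZ
  have hJZ := cx_stable g J hJ2 _ Z hZ
  have hsq := J_sq g J hJ2 Z
  have h1 : ω (Z + Complex.I • J.baseChange ℂ Z) = 0 := by
    apply hω01
    refine ⟨add_mem hZ (Submodule.smul_mem _ _ hJZ), ?_⟩
    change J.baseChange ℂ _ = _
    rw [map_add, map_smul, hsq, smul_add, smul_smul]
    simp [add_comm]
  have h2 : ω (Z - Complex.I • J.baseChange ℂ Z) = 0 := by
    apply hω10
    change J.baseChange ℂ _ = _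
    rw [map_sub, map_smul, hsq, smul_sub, smul_smul]
    simp [add_comm]
  rw [map_add] at h1
  rw [map_sub] at h2
  linear_combination (h1 + h2) / 2
end
end

section
/- Let g be a finite-dimensional real Lie algebra with an abelian complex structure J, let a ≥ 0 and h ≥ 1. Suppose ω̄ : g_ℂ → ℂ is a ℂ-linear functional that vanishes on g^{1,0} and on g_J^{h,(0,1)}. Then for every V ∈ g_J^{a,(1,0)}, the ℂ-linear functional Ȳ ↦ ω̄([V, Ȳ]) on g^{0,1} vanishes on g_J^{h−1,(0,1)}. (This is the contraction statement that the Schouten bracket [V, ω̄] = ι_V dω̄ annihilates g_J^{h−1,(0,1)}.) -/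
open scoped TensorProduct

noncomputable section

theorem aux_lie (g : Type) [LieRing g] [LieAlgebra ℝ g]
    (J : g →ₗ[ℝ] g) (hJ2 : ∀ v : g, J (J v) = -v)
    (hab : ∀ A B : g, ⁅J A, J B⁆ = ⁅A, B⁆) (m : ℕ) (X A : g) (hA : A ∈ gJ g J m) :
    ⁅X, A⁆ ∈ gJ g J (m + 1) := by
  have key : ∀ X B : g, B ∈ lcs g m → ⁅X, B⁆ ∈ lcs g (m + 1) := by
    intro X B hB
    rw [← lie_skew]
    exact neg_mem (Submodule.subset_span ⟨B, hB, X, rfl⟩)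
  obtain ⟨y, hy, z, ⟨w, hw, rfl⟩, rfl⟩ := Submodule.mem_sup.1 hA
  refine Submodule.mem_sup_left ?_
  rw [lie_add]
  refine add_mem (key X y hy) ?_
  rw [← hab X (J w), hJ2, lie_neg]
  exact neg_mem (key _ _ hw)

theorem aux_J (g : Type) [LieRing g] [LieAlgebra ℝ g]
    (J : g →ₗ[ℝ] g) (hJ2 : ∀ v : g, J (J v) = -v) (m : ℕ) (A : g) (hA : A ∈ gJ g J m) :
    J A ∈ gJ g J m := by
  obtain ⟨y, hy, z, ⟨w, hw, rfl⟩, rfl⟩ := Submodule.mem_sup.1 hA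
  rw [map_add, hJ2]
  exact add_mem (Submodule.mem_sup_right ⟨y, hy, rfl⟩) (Submodule.mem_sup_left (neg_mem hw))

theorem aux_lieC (g : Type) [LieRing g] [LieAlgebra ℝ g]
    (J : g →ₗ[ℝ] g) (hJ2 : ∀ v : g, J (J v) = -v)
    (hab : ∀ A B : g, ⁅J A, J B⁆ = ⁅A, B⁆) (m : ℕ) (V Y : ℂ ⊗[ℝ] g)
    (hY : Y ∈ cxS g (gJ g J m)) : ⁅V, Y⁆ ∈ cxS g (gJ g J (m + 1)) := by
  unfold cxS at hY
  rw [Submodule.baseChange_eq_span] at hY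
  induction hY using Submodule.span_induction with
  | mem y hy =>
    obtain ⟨A, hA, rfl⟩ := hy
    induction V using TensorProduct.induction_on with
    | zero => rw [zero_lie]; exact zero_mem _
    | add u v hu hv => rw [add_lie]; exact add_mem hu hv
    | tmul c X =>
      simp only [TensorProduct.mk_apply, LieAlgebra.ExtendScalars.bracket_tmul]
      exact Submodule.tmul_mem_baseChange_of_mem _ (aux_lie g J hJ2 hab m X A hA)
  | zero =>
    have e : ⁅V, (0 : ℂ ⊗[ℝ] g)⁆ = 0 := lie_zero V
    rw [e]; exact zero_mem _
  | add u v _ _ hu hv => 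
    have e : ⁅V, u + v⁆ = ⁅V, u⁆ + ⁅V, v⁆ := lie_add V u v
    rw [e]; exact add_mem hu hv
  | smul c u _ hu => 
    have e : ⁅V, c • u⁆ = c • ⁅V, u⁆ := lie_smul c V u
    rw [e]; exact Submodule.smul_mem _ _ hu

theorem aux_JC (g : Type) [LieRing g] [LieAlgebra ℝ g]
    (J : g →ₗ[ℝ] g) (hJ2 : ∀ v : g, J (J v) = -v) (m : ℕ) (Y : ℂ ⊗[ℝ] g)
    (hY : Y ∈ cxS g (gJ g J m)) : J.baseChange ℂ Y ∈ cxS g (gJ g J m) := by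
  unfold cxS at hY
  rw [Submodule.baseChange_eq_span] at hY
  induction hY using Submodule.span_induction with
  | mem y hy =>
    obtain ⟨A, hA, rfl⟩ := hy
    simp only [TensorProduct.mk_apply, LinearMap.baseChange_tmul]
    exact Submodule.tmul_mem_baseChange_of_mem _ (aux_J g J hJ2 m A hA)
  | zero => rw [map_zero]; exact zero_mem _
  | add u v _ _ hu hv => rw [map_add]; exact add_mem hu hv
  | smul c u _ hu => rw [map_smul]; exact Submodule.smul_mem _ _ hu

theorem aux_JJ (g : Type) [LieRing g] [LieAlgebra ℝ g]
    (J : g →ₗ[ℝ] g) (hJ2 : ∀ v : g, J (J v) = -v) (Y : ℂ ⊗[ℝ] g) :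
    J.baseChange ℂ (J.baseChange ℂ Y) = -Y := by
  induction Y using TensorProduct.induction_on with
  | zero => simp
  | add u v hu hv => rw [map_add, map_add, hu, hv, neg_add]
  | tmul c X => simp [hJ2, TensorProduct.tmul_neg]

/-- If `h ≥ 1` and the ℂ-linear functional `ω̄` on `g_ℂ` vanishes on `g^{1,0}`
and on `g_J^{h,(0,1)}`, then for every `V ∈ g_J^{a,(1,0)}` the functional `Ȳ ↦ ω̄([V, Ȳ])`
vanishes on `g_J^{h-1,(0,1)}`. -/
theorem statement6 (g : Type) [LieRing g] [LieAlgebra ℝ g] [FiniteDimensional ℝ g]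
    (J : g →ₗ[ℝ] g) (hJ2 : ∀ v : g, J (J v) = -v)
    (hab : ∀ A B : g, ⁅J A, J B⁆ = ⁅A, B⁆) (a h : ℕ) (hh : 1 ≤ h)
    (ω : (ℂ ⊗[ℝ] g) →ₗ[ℂ] ℂ)
    (hω10 : ∀ x ∈ eig g J Complex.I, ω x = 0)
    (hω01 : ∀ x ∈ gJ01 g J h, ω x = 0) :
    ∀ V ∈ gJ10 g J a, ∀ Y ∈ gJ01 g J (h - 1), ω ⁅V, Y⁆ = 0 := by
  intro V _ Y hY
  obtain ⟨m, rfl⟩ : ∃ m, h = m + 1 := ⟨h - 1, by omega⟩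
  have hx := aux_lieC g J hJ2 hab m V Y hY.1
  generalize ⁅V, Y⁆ = x at hx
  have hJx := aux_JC g J hJ2 (m + 1) x hx
  have hJJ := aux_JJ g J hJ2 x
  have h1 : ω (x - Complex.I • J.baseChange ℂ x) = 0 := by
    apply hω10
    change J.baseChange ℂ _ = _
    rw [map_sub, map_smul, hJJ, smul_sub, smul_smul, Complex.I_mul_I]
    module
  have h2 : ω (x + Complex.I • J.baseChange ℂ x) = 0 := by
    apply hω01
    refine ⟨add_mem hx (Submodule.smul_mem _ _ hJx), ?_⟩
    change J.baseChange ℂ _ = _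
    rw [map_add, map_smul, hJJ, smul_add, smul_smul, neg_mul, Complex.I_mul_I]
    module
  rw [map_sub] at h1
  rw [map_add] at h2
  linear_combination (h1 + h2) / 2
end
end

section
/- Let g be a k-step nilpotent finite-dimensional real Lie algebra with an abelian complex structure J, let c be the center of g, and suppose c^{1,0} = (c ⊗ ℂ) ∩ g^{1,0} is one-dimensional, spanned by V. Then for every T ∈ g_J^{k−2,(1,0)} and every Ȳ ∈ g^{0,1}, the g^{1,0}-component π^{1,0}([T, Ȳ]) of [T, Ȳ] (with respect to g_ℂ = g^{1,0} ⊕ g^{0,1}) lies in the complex line ℂ·V; consequently V ∧ π^{1,0}([T, Ȳ]) = 0 in Λ² g_ℂ. (This is exactly the statement that the invariant bivector Λ = V ∧ T satisfies ∂̄Λ = 0, so that Λ is an invariant holomorphic Poisson structure.) -/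
open scoped TensorProduct

noncomputable section

theorem aux_bracket (g : Type) [LieRing g] [LieAlgebra ℝ g] (p q : Submodule ℝ g)
    (h : ∀ a ∈ p, ∀ b : g, ⁅a, b⁆ ∈ q) (T : ℂ ⊗[ℝ] g) (hT : T ∈ cxS g p) (Y : ℂ ⊗[ℝ] g) :
    ⁅T, Y⁆ ∈ cxS g q := by
  unfold cxS at *
  rw [Submodule.baseChange_eq_span] at hT
  induction hT using Submodule.span_induction with
  | mem x hx =>
    obtain ⟨a, ha, rfl⟩ := hx
    induction Y using TensorProduct.induction_on with
    | zero =>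
      have : ⁅(TensorProduct.mk ℝ ℂ g 1) a, (0 : ℂ ⊗[ℝ] g)⁆ = 0 :=
        lie_zero (L := ℂ ⊗[ℝ] g) (M := ℂ ⊗[ℝ] g) _
      rw [this]; exact zero_mem _
    | tmul s y =>
      have : ⁅(TensorProduct.mk ℝ ℂ g 1) a, s ⊗ₜ[ℝ] y⁆ = (1 * s) ⊗ₜ[ℝ] ⁅a, y⁆ :=
        LieAlgebra.ExtendScalars.bracket_tmul ℝ ℂ g g 1 s a y
      rw [this]
      exact Submodule.tmul_mem_baseChange_of_mem _ (h a ha y)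
    | add y z hy hz =>
      have : ⁅(TensorProduct.mk ℝ ℂ g 1) a, y + z⁆ = ⁅(TensorProduct.mk ℝ ℂ g 1) a, y⁆ +
          ⁅(TensorProduct.mk ℝ ℂ g 1) a, z⁆ :=
        lie_add (L := ℂ ⊗[ℝ] g) (M := ℂ ⊗[ℝ] g) _ _ _
      rw [this]; exact add_mem hy hz
  | zero => simp
  | add x y _ _ hx hy => rw [add_lie]; exact add_mem hx hy
  | smul c x _ hx => rw [smul_lie]; exact Submodule.smul_mem _ _ hx

theorem aux_J_s7 (g : Type) [LieRing g] [LieAlgebra ℝ g] (J : g →ₗ[ℝ] g) (q : Submodule ℝ g)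
    (h : ∀ a ∈ q, J a ∈ q) (T : ℂ ⊗[ℝ] g) (hT : T ∈ cxS g q) :
    J.baseChange ℂ T ∈ cxS g q := by
  unfold cxS at *
  rw [Submodule.baseChange_eq_span] at hT
  induction hT using Submodule.span_induction with
  | mem x hx =>
    obtain ⟨a, ha, rfl⟩ := hx
    exact Submodule.tmul_mem_baseChange_of_mem _ (h a ha)
  | zero => simp
  | add x y _ _ hx hy => rw [map_add]; exact add_mem hx hy
  | smul c x _ hx => rw [map_smul]; exact Submodule.smul_mem _ _ hx

/-- Let `g` be `k`-step nilpotent with an abelian complex structure `J`,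
with center `c` such that `c^{1,0}` is one-dimensional, spanned by `V`. Then for every
`T ∈ g_J^{k-2,(1,0)}` and `Ȳ ∈ g^{0,1}`, the `g^{1,0}`-component `w` of `[T, Ȳ]` lies in
`ℂ·V`, and consequently `V ∧ w = 0` in the exterior algebra of `g_ℂ`. -/
theorem statement7 (g : Type) [LieRing g] [LieAlgebra ℝ g] [FiniteDimensional ℝ g]
    (J : g →ₗ[ℝ] g) (hJ2 : ∀ v : g, J (J v) = -v)
    (hab : ∀ A B : g, ⁅J A, J B⁆ = ⁅A, B⁆)
    (k : ℕ) (hk : 2 ≤ k) (hstep : lcs g k = ⊥) (hstep' : lcs g (k - 1) ≠ ⊥)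
    (V : ℂ ⊗[ℝ] g) (hV : V ≠ 0)
    (hVspan : cxS g (centerS g) ⊓ eig g J Complex.I = Submodule.span ℂ {V}) :
    ∀ T ∈ gJ10 g J (k - 2), ∀ Y ∈ eig g J (-Complex.I),
      ∀ w ∈ eig g J Complex.I, ⁅T, Y⁆ - w ∈ eig g J (-Complex.I) →
        (∃ c : ℂ, w = c • V) ∧
        ExteriorAlgebra.ι ℂ V * ExteriorAlgebra.ι ℂ w = 0 := by
  intro T hT Y _ w hw hw'
  have hJs : ∀ A B : g, ⁅J A, B⁆ = -⁅A, J B⁆ := by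
    intro A B
    rw [← hab (J A) B, hJ2, neg_lie]
  obtain ⟨n, rfl⟩ : ∃ n, k = n + 2 := ⟨k - 2, by omega⟩
  have hc : ∀ x ∈ lcs g (n + 1), x ∈ centerS g := by
    intro x hx B
    have h1 : ⁅x, B⁆ ∈ lcs g (n + 2) := Submodule.subset_span ⟨x, hx, B, rfl⟩
    rw [hstep] at h1
    simpa using h1
  have hb : ∀ a ∈ gJ g J n, ∀ b : g, ⁅a, b⁆ ∈ centerS g := by
    intro a ha b
    obtain ⟨x, hx, y, hy, rfl⟩ := Submodule.mem_sup.1 ha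
    obtain ⟨z, hz, rfl⟩ := hy
    rw [add_lie, hJs]
    exact add_mem (hc _ (Submodule.subset_span ⟨x, hx, b, rfl⟩))
      (neg_mem (hc _ (Submodule.subset_span ⟨z, hz, J b, rfl⟩)))
  have hTY : ⁅T, Y⁆ ∈ cxS g (centerS g) := aux_bracket g _ _ hb T hT.1 Y
  have hJc : ∀ a ∈ centerS g, J a ∈ centerS g := by
    intro a ha B
    rw [hJs, ha (J B), neg_zero]
  have hJTY := aux_J_s7 g J _ hJc _ hTY
  have e1 : J.baseChange ℂ w = Complex.I • w := hw
  have e2 : J.baseChange ℂ (⁅T, Y⁆ - w) = (-Complex.I) • (⁅T, Y⁆ - w) := hw'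
  rw [map_sub, e1] at e2
  have e3 : J.baseChange ℂ ⁅T, Y⁆ = Complex.I • w + (-Complex.I) • (⁅T, Y⁆ - w) := by
    rw [← e2]; abel
  have e4 : w = (2 * Complex.I)⁻¹ • (J.baseChange ℂ ⁅T, Y⁆ + Complex.I • ⁅T, Y⁆) := by
    rw [eq_inv_smul_iff₀ (by simp), e3]
    module
  have hwc : w ∈ cxS g (centerS g) := by
    rw [e4]
    exact Submodule.smul_mem _ _ (add_mem hJTY (Submodule.smul_mem _ _ hTY))
  have hwV : w ∈ Submodule.span ℂ {V} := by
    rw [← hVspan]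
    exact ⟨hwc, hw⟩
  obtain ⟨c, rfl⟩ := Submodule.mem_span_singleton.1 hwV
  refine ⟨⟨c, rfl⟩, ?_⟩
  rw [map_smul, mul_smul_comm, ExteriorAlgebra.ι_sq_zero, smul_zero]
end
end

section
/- Let g = h_{2m+1} ⊕ h_{2n+1} be the direct sum of two Heisenberg algebras, with basis {X_j, Y_j, Z, A_k, B_k, C : 1 ≤ j ≤ m, 1 ≤ k ≤ n} and only non-zero brackets [X_j, Y_j] = Z and [A_k, B_k] = C. Define J by JX_j = Y_j, JA_k = B_k, JZ = C (and JY_j = −X_j, JB_k = −A_k, JC = −Z). Then: (i) J is an abelian complex structure on g; (ii) setting V = (Z − iC)/2, S_j = (X_j − iY_j)/2, T_k = (A_k − iB_k)/2, the non-zero complex structure equations are [S̄_j, S_j] = −(i/2)(V + V̄) and [T̄_k, T_k] = (1/2)(V − V̄); and (iii) with ρ the ℂ-linear functional on g_ℂ with ρ(V) = 1 and ρ = 0 on V̄ and all S_j, S̄_j, T_k, T̄_k, the map t^{1,0} → (t^{0,1})^*, X ↦ (Ȳ ↦ ρ([X, Ȳ])), where t^{1,0} = span_ℂ{S_j, T_k}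 and t^{0,1} = span_ℂ{S̄_j, T̄_k}, is bijective (dρ is non-degenerate). -/
open scoped TensorProduct

noncomputable section

/-- `(x - i y)/2` as an element of the complexification `ℂ ⊗[ℝ] h`. -/
def holo (h : Type) [AddCommGroup h] [Module ℝ h] (x y : h) : ℂ ⊗[ℝ] h :=
  ((1 : ℂ)/2) ⊗ₜ[ℝ] x - (Complex.I/2) ⊗ₜ[ℝ] y

/-- `(x + i y)/2` as an element of the complexification `ℂ ⊗[ℝ] h`. -/
def antiholo (h : Type) [AddCommGroup h] [Module ℝ h] (x y : h) : ℂ ⊗[ℝ] h :=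
  ((1 : ℂ)/2) ⊗ₜ[ℝ] x + (Complex.I/2) ⊗ₜ[ℝ] y

/-- The pairing `X ↦ (Y ↦ f ⁅X, Y⁆)` between two subspaces of a complex Lie algebra,
where `f` is a ℂ-linear functional. -/
def bracketPairing (L : Type) [LieRing L] [LieAlgebra ℂ L]
    (f : L →ₗ[ℂ] ℂ) (p q : Submodule ℂ L) : p →ₗ[ℂ] Module.Dual ℂ q where
  toFun X :=
    { toFun := fun Y => f ⁅(X : L), (Y : L)⁆
      map_add' := fun Y₁ Y₂ => by simp [lie_add]
      map_smul' := fun c Y => by simp [lie_smul] }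
  map_add' X₁ X₂ := by
    ext Y
    simp [add_lie]
  map_smul' c X := by
    ext Y
    simp [smul_lie]

theorem bracketPairing_bij_aux (L : Type) [LieRing L] [LieAlgebra ℂ L]
    (f : L →ₗ[ℂ] ℂ) {ι : Type} [Fintype ι] [DecidableEq ι] (s t : ι → L) (d : ι → ℂ)
    (hd : ∀ i, d i ≠ 0) (h : ∀ i j, f ⁅s i, t j⁆ = if i = j then d i else 0) :
    Function.Bijective (bracketPairing L f (Submodule.span ℂ (Set.range s))
      (Submodule.span ℂ (Set.range t))) := by
  have key : ∀ (c : ι → ℂ) (j : ι), f ⁅∑ i, c i • s i, t j⁆ = c j * d j := by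
    intro c j
    rw [sum_lie]
    simp [h]
  constructor
  · rw [injective_iff_map_eq_zero]
    rintro ⟨x, hx⟩ h0
    obtain ⟨c, rfl⟩ := (Submodule.mem_span_range_iff_exists_fun ℂ).1 hx
    have hc : ∀ j, c j = 0 := by
      intro j
      have h1 := LinearMap.congr_fun h0 ⟨t j, Submodule.subset_span ⟨j, rfl⟩⟩
      have h2 : f ⁅∑ i, c i • s i, t j⁆ = 0 := h1
      rw [key] at h2
      exact (mul_eq_zero.1 h2).resolve_right (hd j)
    ext
    simp [hc]
  · intro φ
    let c : ι → ℂ := fun j => φ ⟨t j, Submodule.subset_span ⟨j, rfl⟩⟩ / d j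
    refine ⟨⟨∑ i, c i • s i, (Submodule.mem_span_range_iff_exists_fun ℂ).2 ⟨c, rfl⟩⟩, ?_⟩
    ext ⟨y, hy⟩
    induction hy using Submodule.span_induction with
    | mem x hx =>
      obtain ⟨j, rfl⟩ := hx
      change f ⁅∑ i, c i • s i, t j⁆ = _
      rw [key]
      exact div_mul_cancel₀ _ (hd j)
    | zero => exact (map_zero _).trans (map_zero φ).symm
    | add x y hx hy ihx ihy =>
      have e : (⟨x + y, Submodule.add_mem _ hx hy⟩ : Submodule.span ℂ (Set.range t))
        = ⟨x, hx⟩ + ⟨y, hy⟩ := rfl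
      rw [e, map_add, map_add, ihx, ihy]
    | smul a x hx ihx =>
      have e : (⟨a • x, Submodule.smul_mem _ a hx⟩ : Submodule.span ℂ (Set.range t))
        = a • ⟨x, hx⟩ := rfl
      rw [e, map_smul, map_smul, ihx]

theorem lie_holo_aux (g : Type) [LieRing g] [LieAlgebra ℝ g] (x y u v : g) :
    ⁅holo g x y, antiholo g u v⁆ =
      ((1 : ℂ)/4) ⊗ₜ[ℝ] (⁅x, u⁆ + ⁅y, v⁆) + (Complex.I/4) ⊗ₜ[ℝ] (⁅x, v⁆ - ⁅y, u⁆) := by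
  have e1 : (1 : ℂ)/2 * (1/2) = 1/4 := by norm_num
  have e2 : (1 : ℂ)/2 * (Complex.I/2) = Complex.I/4 := by ring
  have e3 : (Complex.I/2) * ((1 : ℂ)/2) = Complex.I/4 := by ring
  have e4 : (Complex.I/2) * (Complex.I/2) = -(1/4) := by
    ring_nf; rw [Complex.I_sq]; norm_num
  simp only [holo, antiholo, lie_add, sub_lie, LieAlgebra.ExtendScalars.bracket_tmul, e1, e2, e3,
    e4, TensorProduct.tmul_add, TensorProduct.tmul_sub, TensorProduct.neg_tmul]
  abel

/-- The direct sum `g = h_{2m+1} ⊕ h_{2n+1}` of two Heisenberg algebras with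
`JX_j = Y_j`, `JA_k = B_k`, `JZ = C`: (i) `J` is an abelian complex structure; (ii) with
`V = (Z - iC)/2`, `S_j = (X_j - iY_j)/2`, `T_k = (A_k - iB_k)/2`, the non-zero complex
structure equations are `[S̄_j, S_j] = -(i/2)(V + V̄)` and `[T̄_k, T_k] = (1/2)(V - V̄)`;
(iii) with `ρ` dual to `V`, the map `t^{1,0} → (t^{0,1})^*`, `X ↦ (Ȳ ↦ ρ([X, Ȳ]))`,
is bijective. -/
theorem statement13 (m n : ℕ) (g : Type) [LieRing g] [LieAlgebra ℝ g]
    (X Y : Fin m → g) (A B : Fin n → g) (Z C : g)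
    (b : Module.Basis (((Fin m ⊕ Fin m) ⊕ (Fin n ⊕ Fin n)) ⊕ Fin 2) ℝ g)
    (hbX : ∀ j, b (Sum.inl (Sum.inl (Sum.inl j))) = X j)
    (hbY : ∀ j, b (Sum.inl (Sum.inl (Sum.inr j))) = Y j)
    (hbA : ∀ k, b (Sum.inl (Sum.inr (Sum.inl k))) = A k)
    (hbB : ∀ k, b (Sum.inl (Sum.inr (Sum.inr k))) = B k)
    (hbZ : b (Sum.inr 0) = Z) (hbC : b (Sum.inr 1) = C)
    (hXY : ∀ j, ⁅X j, Y j⁆ = Z)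
    (hXYne : ∀ j k, j ≠ k → ⁅X j, Y k⁆ = 0)
    (hXX : ∀ j k, ⁅X j, X k⁆ = 0) (hYY : ∀ j k, ⁅Y j, Y k⁆ = 0)
    (hAB : ∀ k, ⁅A k, B k⁆ = C)
    (hABne : ∀ k l, k ≠ l → ⁅A k, B l⁆ = 0)
    (hAA : ∀ k l, ⁅A k, A l⁆ = 0) (hBB : ∀ k l, ⁅B k, B l⁆ = 0)
    (hXA : ∀ j k, ⁅X j, A k⁆ = 0) (hXB : ∀ j k, ⁅X j, B k⁆ = 0)
    (hYA : ∀ j k, ⁅Y j, A k⁆ = 0) (hYB : ∀ j k, ⁅Y j, B k⁆ = 0)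
    (hXZ : ∀ j, ⁅X j, Z⁆ = 0) (hXC : ∀ j, ⁅X j, C⁆ = 0)
    (hYZ : ∀ j, ⁅Y j, Z⁆ = 0) (hYC : ∀ j, ⁅Y j, C⁆ = 0)
    (hAZ : ∀ k, ⁅A k, Z⁆ = 0) (hAC : ∀ k, ⁅A k, C⁆ = 0)
    (hBZ : ∀ k, ⁅B k, Z⁆ = 0) (hBC : ∀ k, ⁅B k, C⁆ = 0)
    (hZC : ⁅Z, C⁆ = 0)
    (J : g →ₗ[ℝ] g)
    (hJX : ∀ j, J (X j) = Y j) (hJY : ∀ j, J (Y j) = -X j)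
    (hJA : ∀ k, J (A k) = B k) (hJB : ∀ k, J (B k) = -A k)
    (hJZ : J Z = C) (hJC : J C = -Z)
    (ρ : (ℂ ⊗[ℝ] g) →ₗ[ℂ] ℂ)
    (hρV : ρ (holo g Z C) = 1) (hρVb : ρ (antiholo g Z C) = 0)
    (hρS : ∀ j, ρ (holo g (X j) (Y j)) = 0)
    (hρSb : ∀ j, ρ (antiholo g (X j) (Y j)) = 0)
    (hρT : ∀ k, ρ (holo g (A k) (B k)) = 0)
    (hρTb : ∀ k, ρ (antiholo g (A k) (B k)) = 0) :
    ((∀ v : g, J (J v) = -v) ∧ (∀ a c : g, ⁅J a, J c⁆ = ⁅a, c⁆)) ∧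
    ((∀ j, ⁅antiholo g (X j) (Y j), holo g (X j) (Y j)⁆
        = (-(Complex.I)/2) • (holo g Z C + antiholo g Z C)) ∧
     (∀ k, ⁅antiholo g (A k) (B k), holo g (A k) (B k)⁆
        = ((1 : ℂ)/2) • (holo g Z C - antiholo g Z C))) ∧
    Function.Bijective (bracketPairing (ℂ ⊗[ℝ] g) ρ
      (Submodule.span ℂ
        ((Set.range fun j => holo g (X j) (Y j)) ∪ (Set.range fun k => holo g (A k) (B k))))
      (Submodule.span ℂ
        ((Set.range fun j => antiholo g (X j) (Y j)) ∪
          (Set.range fun k => antiholo g (A k) (B k))))) := by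
  have hYX : ∀ j, ⁅Y j, X j⁆ = -Z := fun j => by rw [← lie_skew, hXY]
  have hBA : ∀ j, ⁅B j, A j⁆ = -C := fun j => by rw [← lie_skew, hAB]
  have hYXne : ∀ j k, j ≠ k → ⁅Y j, X k⁆ = 0 := fun j k h => by
    rw [← lie_skew, hXYne k j h.symm, neg_zero]
  have hBAne : ∀ j k, j ≠ k → ⁅B j, A k⁆ = 0 := fun j k h => by
    rw [← lie_skew, hABne k j h.symm, neg_zero]
  have hAX : ∀ k j, ⁅A k, X j⁆ = 0 := fun k j => by rw [← lie_skew, hXA, neg_zero]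
  have hBX : ∀ k j, ⁅B k, X j⁆ = 0 := fun k j => by rw [← lie_skew, hXB, neg_zero]
  have hAY : ∀ k j, ⁅A k, Y j⁆ = 0 := fun k j => by rw [← lie_skew, hYA, neg_zero]
  have hBY : ∀ k j, ⁅B k, Y j⁆ = 0 := fun k j => by rw [← lie_skew, hYB, neg_zero]
  have hZX : ∀ j, ⁅Z, X j⁆ = 0 := fun j => by rw [← lie_skew, hXZ, neg_zero]
  have hZY : ∀ j, ⁅Z, Y j⁆ = 0 := fun j => by rw [← lie_skew, hYZ, neg_zero]
  have hZA : ∀ j, ⁅Z, A j⁆ = 0 := fun j => by rw [← lie_skew, hAZ, neg_zero]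
  have hZB : ∀ j, ⁅Z, B j⁆ = 0 := fun j => by rw [← lie_skew, hBZ, neg_zero]
  have hCX : ∀ j, ⁅C, X j⁆ = 0 := fun j => by rw [← lie_skew, hXC, neg_zero]
  have hCY : ∀ j, ⁅C, Y j⁆ = 0 := fun j => by rw [← lie_skew, hYC, neg_zero]
  have hCA : ∀ j, ⁅C, A j⁆ = 0 := fun j => by rw [← lie_skew, hAC, neg_zero]
  have hCB : ∀ j, ⁅C, B j⁆ = 0 := fun j => by rw [← lie_skew, hBC, neg_zero]
  have hCZ : ⁅C, Z⁆ = 0 := by rw [← lie_skew, hZC, neg_zero]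
  have hV : holo g Z C + antiholo g Z C = (1 : ℂ) ⊗ₜ[ℝ] Z := by
    have : (1 : ℂ) = 1/2 + 1/2 := by norm_num
    rw [this, TensorProduct.add_tmul]
    simp only [holo, antiholo]
    abel_nf
  have hV' : holo g Z C - antiholo g Z C = (-Complex.I) ⊗ₜ[ℝ] C := by
    have : -Complex.I = -(Complex.I/2) + -(Complex.I/2) := by ring
    rw [this, TensorProduct.add_tmul, TensorProduct.neg_tmul]
    simp only [holo, antiholo]
    abel_nf
  have hSS : ∀ j, ⁅holo g (X j) (Y j), antiholo g (X j) (Y j)⁆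
      = (Complex.I/2) • (holo g Z C + antiholo g Z C) := by
    intro j
    rw [lie_holo_aux, hXX, hYY, hXY, hYX, hV, TensorProduct.smul_tmul', add_zero,
      TensorProduct.tmul_zero, zero_add, sub_neg_eq_add, TensorProduct.tmul_add,
      ← TensorProduct.add_tmul]
    congr 1
    simp only [smul_eq_mul]
    ring
  have hTT : ∀ k, ⁅holo g (A k) (B k), antiholo g (A k) (B k)⁆
      = (-(1 : ℂ)/2) • (holo g Z C - antiholo g Z C) := by
    intro j
    rw [lie_holo_aux, hAA, hBB, hAB, hBA, hV', TensorProduct.smul_tmul', add_zero,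
      TensorProduct.tmul_zero, zero_add, sub_neg_eq_add, TensorProduct.tmul_add,
      ← TensorProduct.add_tmul]
    congr 1
    simp only [smul_eq_mul]
    ring
  refine ⟨⟨?_, ?_⟩, ⟨?_, ?_⟩, ?_⟩
  · intro v
    have : J ∘ₗ J = -LinearMap.id := by
      apply b.ext
      rintro (((j | j) | (j | j)) | j)
      · simp [hbX, hJX, hJY]
      · simp [hbY, hJX, hJY]
      · simp [hbA, hJA, hJB]
      · simp [hbB, hJA, hJB]
      · fin_cases j
        · simp [hbZ, hJZ, hJC]
        · simp [hbC, hJZ, hJC]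
    exact LinearMap.congr_fun this v
  · intro a c
    let br : g →ₗ[ℝ] g →ₗ[ℝ] g := LinearMap.mk₂ ℝ (fun a c => ⁅a, c⁆) (fun _ _ _ => add_lie _ _ _)
      (fun _ _ _ => smul_lie _ _ _) (fun _ _ _ => lie_add _ _ _) (fun _ _ _ => lie_smul _ _ _)
    have : br.compl₁₂ J J = br := by
      apply LinearMap.ext_basis b b
      intro p q
      change ⁅J (b p), J (b q)⁆ = ⁅b p, b q⁆
      rcases p with (((j | j) | (j | j)) | j) <;> rcases q with (((k | k) | (k | k)) | k) <;>
      [skip; skip; skip; skip; fin_cases k; skip; skip; skip; skip; fin_cases k;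
       skip; skip; skip; skip; fin_cases k; skip; skip; skip; skip; fin_cases k;
       fin_cases j; fin_cases j; fin_cases j; fin_cases j; (fin_cases j <;> fin_cases k)]
      all_goals
        simp only [hbX, hbY, hbA, hbB, hbZ, hbC, hJX, hJY, hJA, hJB, hJZ, hJC, lie_neg, neg_lie,
          Fin.zero_eta, Fin.mk_one, Fin.isValue,
          hXX, hYY, hAA, hBB, hXA, hXB, hYA, hYB, hXZ, hXC, hYZ, hYC, hAZ, hAC, hBZ, hBC, hZC,
          hAX, hBX, hAY, hBY, hZX, hZY, hZA, hZB, hCX, hCY, hCA, hCB, hCZ, neg_zero, lie_self]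
      · by_cases h : j = k
        · subst h; simp [hXY, hYX]
        · simp [hXYne j k h, hYXne j k h]
      · by_cases h : j = k
        · subst h; simp [hXY, hYX]
        · simp [hXYne j k h, hYXne j k h]
      · by_cases h : j = k
        · subst h; simp [hAB, hBA]
        · simp [hABne j k h, hBAne j k h]
      · by_cases h : j = k
        · subst h; simp [hAB, hBA]
        · simp [hABne j k h, hBAne j k h]
    exact LinearMap.congr_fun (LinearMap.congr_fun this a) c
  · intro j
    rw [← lie_skew, hSS, ← neg_smul, neg_div]
  · intro k
    rw [← lie_skew, hTT, ← neg_smul]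
    congr 1
    ring
  · rw [← Set.Sum.elim_range, ← Set.Sum.elim_range]
    refine bracketPairing_bij_aux (ℂ ⊗[ℝ] g) ρ _ _ (d := Sum.elim (fun _ => Complex.I/2) (fun _ => -(1 : ℂ)/2)) ?_ ?_
    · rintro (i | i) <;> simp
    · rintro (i | i) (j | j)
      · by_cases h : i = j
        · subst h
          simp only [Sum.elim_inl, hSS, map_smul, map_add, hρV, hρVb]
          simp
        · simp [lie_holo_aux, hXX, hYY, hXYne i j h, hYXne i j h, h]
      · simp [lie_holo_aux, hXA, hXB, hYA, hYB]
      · simp [lie_holo_aux, hAX, hBX, hAY, hBY]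
      · by_cases h : i = j
        · subst h
          simp only [Sum.elim_inr, hTT, map_smul, map_sub, hρV, hρVb]
          simp
        · simp [lie_holo_aux, hAA, hBB, hABne i j h, hBAne i j h, h]
end
end

section
/- Let P_{4n+2} be the real Lie algebra with basis {X_{4k+1}, X_{4k+2}, X_{4k+3}, X_{4k+4}, Z_1, Z_2 : 0 ≤ k ≤ n−1} and only non-zero brackets [X_{4k+1}, X_{4k+2}] = −(1/2)Z_1, [X_{4k+1}, X_{4k+4}] = −(1/2)Z_2, [X_{4k+2}, X_{4k+3}] = −(1/2)Z_2. Define J by JX_{4k+1} = X_{4k+2}, JX_{4k+3} = −X_{4k+4}, JZ_1 = −Z_2. Then: (i) J is an abelian complex structure on P_{4n+2}; (ii) setting V = (Z_1 + iZ_2)/2, T_{2k+1} = (X_{4k+1} − iX_{4k+2})/2, T_{2k+2} = (X_{4k+3} + iX_{4k+4})/2, the non-zero complex structure equations are [T̄_{2k+1}, T_{2k+1}] = (i/4)(V + V̄) and [T̄_{2k+1}, T_{2k+2}] = −(1/4)(V − V̄); and (iii) with ρ the ℂ-linear functional on the complexification with ρ(V) = 1 and ρ = 0 on V̄ and all T_j,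 T̄_j, the map t^{1,0} → (t^{0,1})^*, X ↦ (Ȳ ↦ ρ([X, Ȳ])), where t^{1,0} = span_ℂ{T_1, …, T_{2n}} and t^{0,1} = span_ℂ{T̄_1, …, T̄_{2n}}, is bijective (dρ is non-degenerate). -/
open scoped TensorProduct

noncomputable section

theorem aux_smul (L : Type) [LieRing L] [LieAlgebra ℂ L] (f : L →ₗ[ℂ] ℂ) (c : ℂ) (x y : L) :
    f ⁅c • x, y⁆ = c * f ⁅x, y⁆ := by
  rw [smul_lie, map_smul, smul_eq_mul]

theorem aux_bij (L : Type) [LieRing L] [LieAlgebra ℂ L] (f : L →ₗ[ℂ] ℂ) (p q : Submodule ℂ L)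
    {ι : Type} [Fintype ι] [DecidableEq ι] (u s : ι → L)
    (hu : ∀ i, u i ∈ p) (hp : p ≤ Submodule.span ℂ (Set.range u))
    (hq : q = Submodule.span ℂ (Set.range s))
    (hd : ∀ i j, f ⁅u i, s j⁆ = if i = j then 1 else 0) :
    Function.Bijective (bracketPairing L f p q) := by
  subst hq
  have hs : ∀ j, s j ∈ Submodule.span ℂ (Set.range s) :=
    fun j => Submodule.subset_span ⟨j, rfl⟩
  have key : ∀ (c : ι → ℂ) j, f ⁅∑ i, c i • u i, s j⁆ = c j := by
    intro c j
    simp [sum_lie, smul_lie, hd]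
  constructor
  · rw [injective_iff_map_eq_zero]
    rintro ⟨x, hx⟩ h
    obtain ⟨c, rfl⟩ := (Submodule.mem_span_range_iff_exists_fun ℂ).1 (hp hx)
    have hc : ∀ j, c j = 0 := by
      intro j
      rw [← key c j]
      exact congrArg (fun φ => φ ⟨s j, hs j⟩) h
    ext
    simp [hc]
  · intro φ
    refine ⟨⟨∑ i, φ ⟨s i, hs i⟩ • u i,
      Submodule.sum_mem _ fun i _ => Submodule.smul_mem _ _ (hu i)⟩, ?_⟩
    ext ⟨y, hy⟩
    obtain ⟨d, rfl⟩ := (Submodule.mem_span_range_iff_exists_fun ℂ).1 hy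
    have e : (⟨∑ i, d i • s i, hy⟩ : Submodule.span ℂ (Set.range s))
        = ∑ i, d i • ⟨s i, hs i⟩ := by
      ext; simp
    rw [e, map_sum, map_sum]
    refine Finset.sum_congr rfl fun j _ => ?_
    rw [map_smul, map_smul]
    congr 1
    exact key _ j

/-- The 2-step nilpotent Lie algebra `P_{4n+2}` (with `n` blocks
`X_{4k+1}, …, X_{4k+4}` and center `Z_1, Z_2`, here `X k i := X_{4k+i+1}`): (i) `J` is an
abelian complex structure; (ii) with `V = (Z_1 + iZ_2)/2`, `T_{2k+1} = (X_{4k+1} - iX_{4k+2})/2`,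
`T_{2k+2} = (X_{4k+3} + iX_{4k+4})/2`, the non-zero complex structure equations are
`[T̄_{2k+1}, T_{2k+1}] = (i/4)(V + V̄)` and `[T̄_{2k+1}, T_{2k+2}] = -(1/4)(V - V̄)`;
(iii) the map `t^{1,0} → (t^{0,1})^*`, `X ↦ (Ȳ ↦ ρ([X, Ȳ]))`, is bijective. -/
theorem statement14 (n : ℕ) (g : Type) [LieRing g] [LieAlgebra ℝ g]
    (X : Fin n → Fin 4 → g) (Z1 Z2 : g)
    (b : Module.Basis ((Fin n × Fin 4) ⊕ Fin 2) ℝ g)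
    (hbX : ∀ k i, b (Sum.inl (k, i)) = X k i)
    (hbZ1 : b (Sum.inr 0) = Z1) (hbZ2 : b (Sum.inr 1) = Z2)
    (h12 : ∀ k, ⁅X k 0, X k 1⁆ = -(1/2 : ℝ) • Z1)
    (h14 : ∀ k, ⁅X k 0, X k 3⁆ = -(1/2 : ℝ) • Z2)
    (h23 : ∀ k, ⁅X k 1, X k 2⁆ = -(1/2 : ℝ) • Z2)
    (h13 : ∀ k, ⁅X k 0, X k 2⁆ = 0)
    (h24 : ∀ k, ⁅X k 1, X k 3⁆ = 0)
    (h34 : ∀ k, ⁅X k 2, X k 3⁆ = 0)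
    (hcross : ∀ k l, k ≠ l → ∀ i i', ⁅X k i, X l i'⁆ = 0)
    (hZ1c : ∀ k i, ⁅X k i, Z1⁆ = 0) (hZ2c : ∀ k i, ⁅X k i, Z2⁆ = 0)
    (hZZ : ⁅Z1, Z2⁆ = 0)
    (J : g →ₗ[ℝ] g)
    (hJ1 : ∀ k, J (X k 0) = X k 1) (hJ2' : ∀ k, J (X k 1) = -X k 0)
    (hJ3 : ∀ k, J (X k 2) = -X k 3) (hJ4 : ∀ k, J (X k 3) = X k 2)
    (hJZ1 : J Z1 = -Z2) (hJZ2 : J Z2 = Z1)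
    (ρ : (ℂ ⊗[ℝ] g) →ₗ[ℂ] ℂ)
    (hρV : ρ (antiholo g Z1 Z2) = 1) (hρVb : ρ (holo g Z1 Z2) = 0)
    (hρ1 : ∀ k, ρ (holo g (X k 0) (X k 1)) = 0)
    (hρ1b : ∀ k, ρ (antiholo g (X k 0) (X k 1)) = 0)
    (hρ2 : ∀ k, ρ (antiholo g (X k 2) (X k 3)) = 0)
    (hρ2b : ∀ k, ρ (holo g (X k 2) (X k 3)) = 0) :
    ((∀ v : g, J (J v) = -v) ∧ (∀ a c : g, ⁅J a, J c⁆ = ⁅a, c⁆)) ∧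
    ((∀ k, ⁅antiholo g (X k 0) (X k 1), holo g (X k 0) (X k 1)⁆
        = (Complex.I/4) • (antiholo g Z1 Z2 + holo g Z1 Z2)) ∧
     (∀ k, ⁅antiholo g (X k 0) (X k 1), antiholo g (X k 2) (X k 3)⁆
        = (-(1 : ℂ)/4) • (antiholo g Z1 Z2 - holo g Z1 Z2))) ∧
    Function.Bijective (bracketPairing (ℂ ⊗[ℝ] g) ρ
      (Submodule.span ℂ
        ((Set.range fun k => holo g (X k 0) (X k 1)) ∪
          (Set.range fun k => antiholo g (X k 2) (X k 3))))
      (Submodule.span ℂ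
        ((Set.range fun k => antiholo g (X k 0) (X k 1)) ∪
          (Set.range fun k => holo g (X k 2) (X k 3))))) := by
  have h21 : ∀ k, ⁅X k 1, X k 0⁆ = (1/2 : ℝ) • Z1 := fun k => by
    rw [← lie_skew, h12]; simp
  have h41 : ∀ k, ⁅X k 3, X k 0⁆ = (1/2 : ℝ) • Z2 := fun k => by
    rw [← lie_skew, h14]; simp
  have h32 : ∀ k, ⁅X k 2, X k 1⁆ = (1/2 : ℝ) • Z2 := fun k => by
    rw [← lie_skew, h23]; simp
  have h31 : ∀ k, ⁅X k 2, X k 0⁆ = 0 := fun k => by rw [← lie_skew, h13]; simp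
  have h42 : ∀ k, ⁅X k 3, X k 1⁆ = 0 := fun k => by rw [← lie_skew, h24]; simp
  have h43 : ∀ k, ⁅X k 3, X k 2⁆ = 0 := fun k => by rw [← lie_skew, h34]; simp
  have hZ1c' : ∀ k i, ⁅Z1, X k i⁆ = 0 := fun k i => by rw [← lie_skew, hZ1c]; simp
  have hZ2c' : ∀ k i, ⁅Z2, X k i⁆ = 0 := fun k i => by rw [← lie_skew, hZ2c]; simp
  have hZZ' : ⁅Z2, Z1⁆ = 0 := by rw [← lie_skew, hZZ]; simp
  have r1 : ∀ c : ℂ, ρ (c ⊗ₜ[ℝ] Z1) = c := by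
    intro c
    have : c ⊗ₜ[ℝ] Z1 = c • (antiholo g Z1 Z2 + holo g Z1 Z2) := by
      simp only [antiholo, holo, add_add_sub_cancel, ← TensorProduct.add_tmul,
        TensorProduct.smul_tmul']
      congr 1
      simp only [smul_eq_mul]; ring
    rw [this, map_smul, map_add, hρV, hρVb]; simp
  have r2 : ∀ c : ℂ, ρ (c ⊗ₜ[ℝ] Z2) = -Complex.I * c := by
    intro c
    have : c ⊗ₜ[ℝ] Z2 = (-Complex.I * c) • (antiholo g Z1 Z2 - holo g Z1 Z2) := by
      simp only [antiholo, holo, add_sub_sub_cancel, ← TensorProduct.add_tmul,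
        TensorProduct.smul_tmul']
      congr 1
      simp only [smul_eq_mul]; ring_nf; simp
    rw [this, map_smul, map_sub, hρV, hρVb]; simp
  have sw : ∀ (c : ℂ) (r : ℝ) (z : g), c ⊗ₜ[ℝ] (r • z) = (c * r) ⊗ₜ[ℝ] z := by
    intro c r z
    rw [← TensorProduct.smul_tmul]
    congr 1
    rw [Complex.real_smul, mul_comm]
  refine ⟨⟨?_, ?_⟩, ⟨?_, ?_⟩, ?_⟩
  · have : J ∘ₗ J = -LinearMap.id := by
      refine b.ext ?_
      rintro (⟨k, i⟩ | i)
      · fin_cases i <;> simp [hbX, hJ1, hJ2', hJ3, hJ4]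
      · fin_cases i <;> simp [hbZ1, hbZ2, hJZ1, hJZ2]
    exact fun v => LinearMap.congr_fun this v
  · have : (LieModule.toEnd ℝ g g : g →ₗ[ℝ] _).compl₁₂ J J
        = (LieModule.toEnd ℝ g g : g →ₗ[ℝ] Module.End ℝ g) := by
      refine b.ext fun x => b.ext fun y => ?_
      simp only [LinearMap.compl₁₂_apply, LieHom.coe_toLinearMap, LieModule.toEnd_apply_apply]
      rcases x with (⟨k, i⟩ | i) <;> rcases y with (⟨l, j⟩ | j)
      · rcases eq_or_ne k l with rfl | h
        · fin_cases i <;> fin_cases j <;>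
            simp [hbX, hJ1, hJ2', hJ3, hJ4, h12, h13, h14, h23, h24, h34, h21, h31, h41, h32,
              h42, h43]
        · fin_cases i <;> fin_cases j <;>
            simp [hbX, hJ1, hJ2', hJ3, hJ4, hcross k l h]
      · fin_cases i <;> fin_cases j <;>
            simp [hbX, hbZ1, hbZ2, hJZ1, hJZ2, hJ1, hJ2', hJ3, hJ4, hZ1c, hZ2c]
      · fin_cases i <;> fin_cases j <;>
            simp [hbX, hbZ1, hbZ2, hJZ1, hJZ2, hJ1, hJ2', hJ3, hJ4, hZ1c', hZ2c']
      · fin_cases i <;> fin_cases j <;>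
            simp [hbZ1, hbZ2, hJZ1, hJZ2, hZZ, hZZ']
    exact fun a c => LinearMap.congr_fun (LinearMap.congr_fun this a) c
  · intro k
    simp only [antiholo, holo, add_add_sub_cancel, ← TensorProduct.add_tmul, add_lie, lie_sub,
      LieAlgebra.ExtendScalars.bracket_tmul, lie_self, TensorProduct.tmul_zero, h12, h21, sw,
      TensorProduct.smul_tmul', zero_sub, sub_zero, ← TensorProduct.neg_tmul]
    congr 1
    push_cast
    simp only [smul_eq_mul]
    ring
  · intro k
    simp only [antiholo, holo, add_sub_sub_cancel, ← TensorProduct.add_tmul, add_lie, lie_add,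
      LieAlgebra.ExtendScalars.bracket_tmul, TensorProduct.tmul_zero, h13, h14, h23, h24, sw,
      TensorProduct.smul_tmul', zero_add, add_zero]
    congr 1
    push_cast
    simp only [smul_eq_mul]
    ring
  · have e11 : ∀ k l, ρ ⁅holo g (X k 0) (X k 1), antiholo g (X l 0) (X l 1)⁆
        = if k = l then -Complex.I/4 else 0 := by
      intro k l
      split_ifs with h
      · subst h
        simp only [antiholo, holo, add_lie, lie_add, sub_lie, lie_sub, map_add, map_sub, map_zero,
          LieAlgebra.ExtendScalars.bracket_tmul, TensorProduct.tmul_zero, lie_self, h12, h21,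
          sw, r1, r2]
        push_cast
        ring
      · simp [antiholo, holo, hcross k l h]
    have e21 : ∀ k l, ρ ⁅antiholo g (X k 2) (X k 3), antiholo g (X l 0) (X l 1)⁆
        = if k = l then 1/4 else 0 := by
      intro k l
      split_ifs with h
      · subst h
        simp only [antiholo, holo, add_lie, lie_add, sub_lie, lie_sub, map_add, map_sub, map_zero,
          LieAlgebra.ExtendScalars.bracket_tmul, TensorProduct.tmul_zero, lie_self, h31, h32, h41,
          h42, sw, r1, r2]
        push_cast
        ring_nf
        simp
        try ring
      · simp [antiholo, hcross k l h]
    have e12 : ∀ k l, ρ ⁅holo g (X k 0) (X k 1), holo g (X l 2) (X l 3)⁆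
        = if k = l then 1/4 else 0 := by
      intro k l
      split_ifs with h
      · subst h
        simp only [antiholo, holo, add_lie, lie_add, sub_lie, lie_sub, map_add, map_sub, map_zero,
          LieAlgebra.ExtendScalars.bracket_tmul, TensorProduct.tmul_zero, lie_self, h13, h14, h23,
          h24, sw, r1, r2]
        push_cast
        ring_nf
        simp
        try ring
      · simp [holo, hcross k l h]
    have e22 : ∀ k l, ρ ⁅antiholo g (X k 2) (X k 3), holo g (X l 2) (X l 3)⁆ = 0 := by
      intro k l
      rcases eq_or_ne k l with rfl | h
      · simp [antiholo, holo, h34, h43]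
      · simp [antiholo, holo, hcross k l h]
    have hsm : ∀ (c : ℂ) (x y : ℂ ⊗[ℝ] g), ρ ⁅c • x, y⁆ = c * ρ ⁅x, y⁆ :=
      fun c x y => aux_smul (ℂ ⊗[ℝ] g) ρ c x y
    refine aux_bij _ ρ _ _ (ι := Fin n ⊕ Fin n)
      (Sum.elim (fun k => (4 : ℂ) • antiholo g (X k 2) (X k 3))
        (fun k => (4 : ℂ) • holo g (X k 0) (X k 1)
          + (4 * Complex.I) • antiholo g (X k 2) (X k 3)))
      (Sum.elim (fun k => antiholo g (X k 0) (X k 1)) (fun k => holo g (X k 2) (X k 3)))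
      ?_ ?_ ?_ ?_
    · have m1 : ∀ k, holo g (X k 0) (X k 1) ∈ Submodule.span ℂ
        ((Set.range fun k => holo g (X k 0) (X k 1)) ∪
          (Set.range fun k => antiholo g (X k 2) (X k 3))) :=
        fun k => Submodule.subset_span (Or.inl ⟨k, rfl⟩)
      have m2 : ∀ k, antiholo g (X k 2) (X k 3) ∈ Submodule.span ℂ
        ((Set.range fun k => holo g (X k 0) (X k 1)) ∪
          (Set.range fun k => antiholo g (X k 2) (X k 3))) :=
        fun k => Submodule.subset_span (Or.inr ⟨k, rfl⟩)
      rintro (k | k)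
      · exact Submodule.smul_mem _ _ (m2 k)
      · exact Submodule.add_mem _ (Submodule.smul_mem _ _ (m1 k)) (Submodule.smul_mem _ _ (m2 k))
    · rw [Submodule.span_le]
      set u : Fin n ⊕ Fin n → ℂ ⊗[ℝ] g :=
        Sum.elim (fun k => (4 : ℂ) • antiholo g (X k 2) (X k 3))
        (fun k => (4 : ℂ) • holo g (X k 0) (X k 1)
          + (4 * Complex.I) • antiholo g (X k 2) (X k 3)) with hu
      have m : ∀ i, u i ∈ Submodule.span ℂ (Set.range u) :=
        fun i => Submodule.subset_span ⟨i, rfl⟩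
      rintro _ (⟨k, rfl⟩ | ⟨k, rfl⟩)
      · have : holo g (X k 0) (X k 1)
            = (1/4 : ℂ) • u (Sum.inr k) - (Complex.I/4) • u (Sum.inl k) := by
          simp only [hu, Sum.elim_inl, Sum.elim_inr]
          module
        change holo g (X k 0) (X k 1) ∈ _
        rw [this]
        exact Submodule.sub_mem _ (Submodule.smul_mem _ _ (m _)) (Submodule.smul_mem _ _ (m _))
      · have : antiholo g (X k 2) (X k 3) = (1/4 : ℂ) • u (Sum.inl k) := by
          simp only [hu, Sum.elim_inl]
          module
        change antiholo g (X k 2) (X k 3) ∈ _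
        rw [this]
        exact Submodule.smul_mem _ _ (m _)
    · rw [Set.Sum.elim_range]
    · rintro (k | k) (l | l) <;>
        simp only [Sum.elim_inl, Sum.elim_inr, add_lie, hsm, map_add, e11, e12,
          e21, e22, Sum.inl.injEq, Sum.inr.injEq, reduceCtorEq, if_false, smul_eq_mul] <;>
        (try split_ifs) <;> ring
end
end

section
/- Let W_{4n+6} be the real Lie algebra with basis {X_{4k+1}, X_{4k+2}, X_{4k+3}, X_{4k+4}, Z_1, Z_2 : 0 ≤ k ≤ n} and only non-zero brackets [X_{4k+1}, X_{4k+3}] = −(1/2)Z_1, [X_{4k+1}, X_{4k+4}] = −(1/2)Z_2, [X_{4k+2}, X_{4k+3}] = −(1/2)Z_2, [X_{4k+2}, X_{4k+4}] = (1/2)Z_1, and define J by JX_{4k+1} = X_{4k+2}, JX_{4k+3} = −X_{4k+4}, JZ_1 = −Z_2. Set V = (Z_1 + iZ_2)/2, T_{2k+1} = (X_{4k+1} − iX_{4k+2})/2, T_{2k+2} = (X_{4k+3} + iX_{4k+4})/2, t^{1,0} = span_ℂ{T_1, …, T_{2n+2}}, t^{0,1} = span_ℂ{T̄_1, …, T̄_{2n+2}},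 and let ρ be the ℂ-linear functional with ρ(V) = 1 and ρ = 0 on V̄ and all T_j, T̄_j, with conjugate ρ̄. Then: (i) J is an abelian complex structure and W_{4n+6} is 2-step nilpotent with center span{Z_1, Z_2}; (ii) the images in (t^{0,1})^* of the maps dρ : X ↦ (Ȳ ↦ −ρ([X, Ȳ])) and dρ̄ : T ↦ (Ȳ ↦ −ρ̄([T, Ȳ])) on t^{1,0} intersect only in {0}; (iii) the kernel of dρ̄ is span_ℂ{T_2, T_4, …, T_{2n+2}}. Consequently, for T ∈ t^{1,0} the equation ι_T dρ̄ = −ι_X dρ has a solution X ∈ t^{1,0} if and only if ι_T dρ̄ = 0, i.e. if and only if T ∈ span_ℂ{T_2, T_4, …, T_{2n+2}}; in particular for T = T_{2k+1} no solution exists, so ad_Λ(ρ̄) is not ∂̄-exact for Λ = V ∧ T_{2k+1} and the holomorphic Poisson spectral sequence fails to degenerate on its first page. -/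
open scoped TensorProduct

noncomputable section

/-- The 2-step nilpotent Lie algebra `W_{4n+6}` (blocks
`X_{4k+1}, …, X_{4k+4}`, `0 ≤ k ≤ n`, center `Z_1, Z_2`, here `X k i := X_{4k+i+1}`), with
`V = (Z_1 + iZ_2)/2`, `T_{2k+1} = (X_{4k+1} - iX_{4k+2})/2`, `T_{2k+2} = (X_{4k+3} + iX_{4k+4})/2`,
`ρ` dual to `V` and conjugate `ρ̄`: (i) `J` is an abelian complex structure and `W` is 2-step
nilpotent with center `span{Z_1, Z_2}`; (ii) the images of `dρ` and `dρ̄` intersect only in `0`;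
(iii) the kernel of `dρ̄` is `span{T_2, T_4, …, T_{2n+2}}`. Consequently `ι_T dρ̄ = -ι_X dρ` is
solvable iff `T ∈ span{T_{2k+2}}`, and for `T = T_{2k+1}` no solution exists. -/
theorem statement15 (n : ℕ) (g : Type) [LieRing g] [LieAlgebra ℝ g]
    (X : Fin (n + 1) → Fin 4 → g) (Z1 Z2 : g)
    (b : Module.Basis ((Fin (n + 1) × Fin 4) ⊕ Fin 2) ℝ g)
    (hbX : ∀ k i, b (Sum.inl (k, i)) = X k i)
    (hbZ1 : b (Sum.inr 0) = Z1) (hbZ2 : b (Sum.inr 1) = Z2)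
    (h13 : ∀ k, ⁅X k 0, X k 2⁆ = -(1/2 : ℝ) • Z1)
    (h14 : ∀ k, ⁅X k 0, X k 3⁆ = -(1/2 : ℝ) • Z2)
    (h23 : ∀ k, ⁅X k 1, X k 2⁆ = -(1/2 : ℝ) • Z2)
    (h24 : ∀ k, ⁅X k 1, X k 3⁆ = (1/2 : ℝ) • Z1)
    (h12 : ∀ k, ⁅X k 0, X k 1⁆ = 0)
    (h34 : ∀ k, ⁅X k 2, X k 3⁆ = 0)
    (hcross : ∀ k l, k ≠ l → ∀ i i', ⁅X k i, X l i'⁆ = 0)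
    (hZ1c : ∀ k i, ⁅X k i, Z1⁆ = 0) (hZ2c : ∀ k i, ⁅X k i, Z2⁆ = 0)
    (hZZ : ⁅Z1, Z2⁆ = 0)
    (J : g →ₗ[ℝ] g)
    (hJ1 : ∀ k, J (X k 0) = X k 1) (hJ2' : ∀ k, J (X k 1) = -X k 0)
    (hJ3 : ∀ k, J (X k 2) = -X k 3) (hJ4 : ∀ k, J (X k 3) = X k 2)
    (hJZ1 : J Z1 = -Z2) (hJZ2 : J Z2 = Z1)
    (ρ : (ℂ ⊗[ℝ] g) →ₗ[ℂ] ℂ)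
    (hρV : ρ (antiholo g Z1 Z2) = 1) (hρVb : ρ (holo g Z1 Z2) = 0)
    (hρ1 : ∀ k, ρ (holo g (X k 0) (X k 1)) = 0)
    (hρ1b : ∀ k, ρ (antiholo g (X k 0) (X k 1)) = 0)
    (hρ2 : ∀ k, ρ (antiholo g (X k 2) (X k 3)) = 0)
    (hρ2b : ∀ k, ρ (holo g (X k 2) (X k 3)) = 0)
    (ρbar : (ℂ ⊗[ℝ] g) →ₗ[ℂ] ℂ)
    (hρbV : ρbar (antiholo g Z1 Z2) = 0) (hρbVb : ρbar (holo g Z1 Z2) = 1)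
    (hρb1 : ∀ k, ρbar (holo g (X k 0) (X k 1)) = 0)
    (hρb1b : ∀ k, ρbar (antiholo g (X k 0) (X k 1)) = 0)
    (hρb2 : ∀ k, ρbar (antiholo g (X k 2) (X k 3)) = 0)
    (hρb2b : ∀ k, ρbar (holo g (X k 2) (X k 3)) = 0) :
    -- (i) abelian complex structure, 2-step nilpotency, center = span{Z1, Z2}
    ((∀ v : g, J (J v) = -v) ∧ (∀ a c : g, ⁅J a, J c⁆ = ⁅a, c⁆)) ∧
    ((∀ a c e : g, ⁅⁅a, c⁆, e⁆ = 0) ∧ (∃ a c : g, ⁅a, c⁆ ≠ 0) ∧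
      (∀ w : g, (∀ u : g, ⁅w, u⁆ = 0) ↔ w ∈ Submodule.span ℝ ({Z1, Z2} : Set g))) ∧
    -- (ii) the images of dρ and dρ̄ on t^{1,0} intersect only in {0}
    (∀ S ∈ Submodule.span ℂ
        ((Set.range fun k => holo g (X k 0) (X k 1)) ∪
          (Set.range fun k => antiholo g (X k 2) (X k 3))),
      ∀ T ∈ Submodule.span ℂ
        ((Set.range fun k => holo g (X k 0) (X k 1)) ∪
          (Set.range fun k => antiholo g (X k 2) (X k 3))),
      (∀ Y ∈ Submodule.span ℂ
          ((Set.range fun k => antiholo g (X k 0) (X k 1)) ∪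
            (Set.range fun k => holo g (X k 2) (X k 3))),
        ρ ⁅S, Y⁆ = ρbar ⁅T, Y⁆) →
      (∀ Y ∈ Submodule.span ℂ
          ((Set.range fun k => antiholo g (X k 0) (X k 1)) ∪
            (Set.range fun k => holo g (X k 2) (X k 3))),
        ρ ⁅S, Y⁆ = 0)) ∧
    -- (iii) kernel of dρ̄ is span{T_2, T_4, …, T_{2n+2}}
    (∀ T ∈ Submodule.span ℂ
        ((Set.range fun k => holo g (X k 0) (X k 1)) ∪
          (Set.range fun k => antiholo g (X k 2) (X k 3))),
      ((∀ Y ∈ Submodule.span ℂ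
          ((Set.range fun k => antiholo g (X k 0) (X k 1)) ∪
            (Set.range fun k => holo g (X k 2) (X k 3))),
        ρbar ⁅T, Y⁆ = 0) ↔
        T ∈ Submodule.span ℂ (Set.range fun k => antiholo g (X k 2) (X k 3)))) ∧
    -- consequence: solvability of ι_T dρ̄ = -ι_X dρ iff T ∈ span{T_{2k+2}}
    (∀ T ∈ Submodule.span ℂ
        ((Set.range fun k => holo g (X k 0) (X k 1)) ∪
          (Set.range fun k => antiholo g (X k 2) (X k 3))),
      ((∃ x ∈ Submodule.span ℂ
          ((Set.range fun k => holo g (X k 0) (X k 1)) ∪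
            (Set.range fun k => antiholo g (X k 2) (X k 3))),
        ∀ Y ∈ Submodule.span ℂ
          ((Set.range fun k => antiholo g (X k 0) (X k 1)) ∪
            (Set.range fun k => holo g (X k 2) (X k 3))),
          ρbar ⁅T, Y⁆ = -ρ ⁅x, Y⁆) ↔
        T ∈ Submodule.span ℂ (Set.range fun k => antiholo g (X k 2) (X k 3)))) ∧
    -- in particular, no solution exists for T = T_{2k+1}
    (∀ k, ¬ ∃ x ∈ Submodule.span ℂ
        ((Set.range fun k' => holo g (X k' 0) (X k' 1)) ∪
          (Set.range fun k' => antiholo g (X k' 2) (X k' 3))),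
      ∀ Y ∈ Submodule.span ℂ
        ((Set.range fun k' => antiholo g (X k' 0) (X k' 1)) ∪
          (Set.range fun k' => holo g (X k' 2) (X k' 3))),
        ρbar ⁅holo g (X k 0) (X k 1), Y⁆ = -ρ ⁅x, Y⁆) := by
  -- brackets of basis vectors
  have h11 : ∀ k i, ⁅X k i, X k i⁆ = 0 := fun k i => lie_self _
  have h31 : ∀ k, ⁅X k 2, X k 0⁆ = (1/2 : ℝ) • Z1 := fun k => by
    rw [← lie_skew, h13]; module
  have h41 : ∀ k, ⁅X k 3, X k 0⁆ = (1/2 : ℝ) • Z2 := fun k => by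
    rw [← lie_skew, h14]; module
  have h32 : ∀ k, ⁅X k 2, X k 1⁆ = (1/2 : ℝ) • Z2 := fun k => by
    rw [← lie_skew, h23]; module
  have h42 : ∀ k, ⁅X k 3, X k 1⁆ = -(1/2 : ℝ) • Z1 := fun k => by
    rw [← lie_skew, h24]; module
  have h21 : ∀ k, ⁅X k 1, X k 0⁆ = 0 := fun k => by rw [← lie_skew, h12]; simp
  have h43 : ∀ k, ⁅X k 3, X k 2⁆ = 0 := fun k => by rw [← lie_skew, h34]; simp
  have hZ1c' : ∀ k i, ⁅Z1, X k i⁆ = 0 := fun k i => by rw [← lie_skew, hZ1c]; simp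
  have hZ2c' : ∀ k i, ⁅Z2, X k i⁆ = 0 := fun k i => by rw [← lie_skew, hZ2c]; simp
  have hZZ' : ⁅Z2, Z1⁆ = 0 := by rw [← lie_skew, hZZ]; simp
  -- induction on the basis
  have key : ∀ (f : g →ₗ[ℝ] g), (∀ k i, f (X k i) = 0) → f Z1 = 0 → f Z2 = 0 → ∀ v, f v = 0 := by
    intro f hX hz1 hz2 v
    have : f = 0 := by
      apply b.ext
      rintro (⟨k, i⟩ | i)
      · rw [hbX, hX]; rfl
      · fin_cases i
        · simpa [hbZ1] using hz1
        · simpa [hbZ2] using hz2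
    rw [this]; rfl
  have key2 : ∀ (f : g →ₗ[ℝ] g →ₗ[ℝ] g), (∀ k i l j, f (X k i) (X l j) = 0) →
      (∀ k i, f (X k i) Z1 = 0) → (∀ k i, f (X k i) Z2 = 0) →
      (∀ k i, f Z1 (X k i) = 0) → (∀ k i, f Z2 (X k i) = 0) →
      f Z1 Z1 = 0 → f Z1 Z2 = 0 → f Z2 Z1 = 0 → f Z2 Z2 = 0 → ∀ v w, f v w = 0 := by
    intro f a1 a2 a3 a4 a5 a6 a7 a8 a9 v w
    refine key (f.flip w) ?_ ?_ ?_ v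
    · intro k i; exact key (f (X k i)) (a1 k i) (a2 k i) (a3 k i) w
    · exact key (f Z1) a4 a6 a7 w
    · exact key (f Z2) a5 a8 a9 w
  let br : g →ₗ[ℝ] g →ₗ[ℝ] g := (LieModule.toEnd ℝ g g : g →ₗ[ℝ] g →ₗ[ℝ] g)
  have hbr : ∀ u v, br u v = ⁅u, v⁆ := fun u v => rfl
  have hJJ : ∀ v : g, J (J v) = -v := by
    intro v
    have := key (J ∘ₗ J + LinearMap.id) (fun k i => by
      fin_cases i <;> simp [hJ1, hJ2', hJ3, hJ4]) (by simp [hJZ1, hJZ2]) (by simp [hJZ1, hJZ2]) v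
    simpa [add_eq_zero_iff_eq_neg] using this
  have hJab : ∀ a c : g, ⁅J a, J c⁆ = ⁅a, c⁆ := by
    intro a c
    have := key2 (br.compl₁₂ J J - br) (by
      intro k i l j
      simp only [LinearMap.sub_apply, LinearMap.compl₁₂_apply, hbr]
      by_cases hkl : k = l
      · subst hkl
        fin_cases i <;> fin_cases j <;>
          simp [hJ1, hJ2', hJ3, hJ4, h13, h14, h23, h24, h31, h41, h32, h42, h12, h21, h34, h43]
      · fin_cases i <;> fin_cases j <;> simp [hJ1, hJ2', hJ3, hJ4, hcross k l hkl])
      (by intro k i; fin_cases i <;>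
            simp [hbr, hJ1, hJ2', hJ3, hJ4, hJZ1, hJZ2, hZ1c, hZ2c])
      (by intro k i; fin_cases i <;>
            simp [hbr, hJ1, hJ2', hJ3, hJ4, hJZ1, hJZ2, hZ1c, hZ2c])
      (by intro k i; fin_cases i <;>
            simp [hbr, hJ1, hJ2', hJ3, hJ4, hJZ1, hJZ2, hZ1c', hZ2c'])
      (by intro k i; fin_cases i <;>
            simp [hbr, hJ1, hJ2', hJ3, hJ4, hJZ1, hJZ2, hZ1c', hZ2c'])
      (by simp [hbr, hJZ1, hJZ2, hZZ, hZZ'])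
      (by simp [hbr, hJZ1, hJZ2, hZZ, hZZ'])
      (by simp [hbr, hJZ1, hJZ2, hZZ, hZZ'])
      (by simp [hbr, hJZ1, hJZ2, hZZ, hZZ']) a c
    simpa [hbr, sub_eq_zero] using this
  have hz1 : ∀ u : g, ⁅Z1, u⁆ = 0 := fun u => key (br Z1) (by simpa [hbr] using hZ1c')
    (by simp [hbr]) (by simp [hbr, hZZ]) u
  have hz2 : ∀ u : g, ⁅Z2, u⁆ = 0 := fun u => key (br Z2) (by simpa [hbr] using hZ2c')
    (by simp [hbr, hZZ']) (by simp [hbr]) u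
  have hz1' : ∀ u : g, ⁅u, Z1⁆ = 0 := fun u => by rw [← lie_skew, hz1]; simp
  have hz2' : ∀ u : g, ⁅u, Z2⁆ = 0 := fun u => by rw [← lie_skew, hz2]; simp
  have hstep : ∀ a c e : g, ⁅⁅a, c⁆, e⁆ = 0 := by
    intro a c e
    refine key2 (br.compr₂ (br.flip e)) ?_ ?_ ?_ ?_ ?_ ?_ ?_ ?_ ?_ a c
    · intro k i l j
      simp only [LinearMap.compr₂_apply, LinearMap.flip_apply, hbr]
      by_cases hkl : k = l
      · subst hkl
        fin_cases i <;> fin_cases j <;>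
          simp [h13, h14, h23, h24, h31, h41, h32, h42, h12, h21, h34, h43, hz1, hz2]
      · simp [hcross k l hkl]
    all_goals simp [hbr, hz1, hz2, hz1', hz2']
  have hli : ∀ s t : ℝ, s • Z1 + t • Z2 = 0 → s = 0 ∧ t = 0 := by
    intro s t h
    have h1 := congrArg (fun v => b.repr v (Sum.inr 0)) h
    have h2 := congrArg (fun v => b.repr v (Sum.inr 1)) h
    simp [← hbZ1, ← hbZ2] at h1 h2
    exact ⟨h1, h2⟩
  have hZ1ne : Z1 ≠ 0 := fun h => one_ne_zero (hli 1 0 (by simp [h])).1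
  let cd : ((Fin (n + 1) × Fin 4) ⊕ Fin 2) → g →ₗ[ℝ] ℝ := fun i => b.coord i
  have hcX : ∀ k i l j, cd (Sum.inl (k, i)) (X l j) = if l = k ∧ j = i then 1 else 0 := by
    intro k i l j
    simp [cd, ← hbX, Finsupp.single_apply]
  have hcZ1 : ∀ k i, cd (Sum.inl (k, i)) Z1 = 0 := by
    intro k i
    simp [cd, ← hbZ1]
  have hcZ2 : ∀ k i, cd (Sum.inl (k, i)) Z2 = 0 := by
    intro k i
    simp [cd, ← hbZ2]
  have hw2 : ∀ w k, ⁅w, X k 2⁆ = (-(1/2) * cd (Sum.inl (k, 0)) w) • Z1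
      + (-(1/2) * cd (Sum.inl (k, 1)) w) • Z2 := by
    intro w k
    have := key (br.flip (X k 2) - ((-(1/2 : ℝ)) • (cd (Sum.inl (k, 0))).smulRight Z1
      + (-(1/2 : ℝ)) • (cd (Sum.inl (k, 1))).smulRight Z2)) (by
        intro l j
        by_cases hkl : l = k
        · subst hkl
          fin_cases j <;> simp [hbr, hcX, h13, h23, h43]
        · simp [hbr, hcX, hkl, hcross l k hkl]) (by simp [hbr, hz1, hcZ1])
          (by simp [hbr, hz2, hcZ2]) w
    simpa [hbr, sub_eq_zero, mul_smul] using this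
  have hw0 : ∀ w k, ⁅w, X k 0⁆ = ((1/2) * cd (Sum.inl (k, 2)) w) • Z1
      + ((1/2) * cd (Sum.inl (k, 3)) w) • Z2 := by
    intro w k
    have := key (br.flip (X k 0) - (((1/2 : ℝ)) • (cd (Sum.inl (k, 2))).smulRight Z1
      + ((1/2 : ℝ)) • (cd (Sum.inl (k, 3))).smulRight Z2)) (by
        intro l j
        by_cases hkl : l = k
        · subst hkl
          fin_cases j <;> simp [hbr, hcX, h31, h41, h21]
        · simp [hbr, hcX, hkl, hcross l k hkl]) (by simp [hbr, hz1, hcZ1])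
          (by simp [hbr, hz2, hcZ2]) w
    simpa [hbr, sub_eq_zero, mul_smul] using this
  have hcenter : ∀ w : g, (∀ u : g, ⁅w, u⁆ = 0) ↔ w ∈ Submodule.span ℝ ({Z1, Z2} : Set g) := by
    intro w
    constructor
    · intro h
      have c0 : ∀ k i, b.repr w (Sum.inl (k, i)) = 0 := by
        intro k i
        have e2 := hli _ _ ((hw2 w k).symm.trans (h _))
        have e0 := hli _ _ ((hw0 w k).symm.trans (h _))
        simp [cd] at e2 e0
        fin_cases i
        · exact e2.1
        · exact e2.2
        · exact e0.1
        · exact e0.2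
      rw [Submodule.mem_span_pair]
      refine ⟨b.repr w (Sum.inr 0), b.repr w (Sum.inr 1), ?_⟩
      have e := b.sum_repr w
      rw [Fintype.sum_sum_type, Fin.sum_univ_two, Finset.sum_eq_zero, zero_add, hbZ1, hbZ2] at e
      · exact e
      · rintro ⟨k, i⟩ _
        rw [c0, zero_smul]
    · intro h u
      obtain ⟨s, t, rfl⟩ := Submodule.mem_span_pair.1 h
      simp [hz1, hz2]
  -- complex brackets
  have tm : ∀ (c : ℂ) (r : ℝ) (z : g), c ⊗ₜ[ℝ] (r • z) = (c * r) • ((1 : ℂ) ⊗ₜ[ℝ] z) := by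
    intro c r z
    rw [TensorProduct.tmul_smul, TensorProduct.smul_tmul', TensorProduct.smul_tmul']
    simp [mul_comm]
  have tm' : ∀ (c : ℂ) (z : g), c ⊗ₜ[ℝ] z = c • ((1 : ℂ) ⊗ₜ[ℝ] z) := by
    intro c z
    rw [TensorProduct.smul_tmul']
    simp
  have hAAb : ∀ k l, ⁅holo g (X k 0) (X k 1), antiholo g (X l 0) (X l 1)⁆ = 0 := by
    intro k l
    by_cases hkl : k = l
    · subst hkl
      simp [holo, antiholo, LieAlgebra.ExtendScalars.bracket_tmul, h12, h21]
    · simp [holo, antiholo, LieAlgebra.ExtendScalars.bracket_tmul, hcross k l hkl]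
  have hBBb : ∀ k l, ⁅antiholo g (X k 2) (X k 3), holo g (X l 2) (X l 3)⁆ = 0 := by
    intro k l
    by_cases hkl : k = l
    · subst hkl
      simp [holo, antiholo, LieAlgebra.ExtendScalars.bracket_tmul, h34, h43]
    · simp [holo, antiholo, LieAlgebra.ExtendScalars.bracket_tmul, hcross k l hkl]
  have hABb : ∀ k l, ⁅holo g (X k 0) (X k 1), holo g (X l 2) (X l 3)⁆ =
      (if k = l then -(1/2 : ℂ) else 0) • holo g Z1 Z2 := by
    intro k l
    by_cases hkl : k = l
    · subst hkl
      simp only [holo, lie_sub, sub_lie, LieAlgebra.ExtendScalars.bracket_tmul, h13, h14, h23, h24,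
        tm, if_true]
      rw [tm' (1 / 2) Z1, tm' (Complex.I / 2) Z2]
      match_scalars <;> ring_nf <;> (try simp) <;> (try ring_nf)
    · simp [holo, LieAlgebra.ExtendScalars.bracket_tmul, hcross k l hkl, hkl]
  have hBAb : ∀ k l, ⁅antiholo g (X k 2) (X k 3), antiholo g (X l 0) (X l 1)⁆ =
      (if k = l then (1/2 : ℂ) else 0) • antiholo g Z1 Z2 := by
    intro k l
    by_cases hkl : k = l
    · subst hkl
      simp only [antiholo, lie_add, add_lie, LieAlgebra.ExtendScalars.bracket_tmul, h31, h41, h32,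
        h42, tm, if_true]
      rw [tm' (1 / 2) Z1, tm' (Complex.I / 2) Z2]
      match_scalars <;> ring_nf <;> (try simp) <;> (try ring_nf)
    · simp [antiholo, LieAlgebra.ExtendScalars.bracket_tmul, hcross k l hkl, hkl]
  have hS : ∀ S ∈ Submodule.span ℂ
        ((Set.range fun k => holo g (X k 0) (X k 1)) ∪
          (Set.range fun k => antiholo g (X k 2) (X k 3))), 
        (∀ l, ρ ⁅S, holo g (X l 2) (X l 3)⁆ = 0) ∧
        (∀ l, ρbar ⁅S, antiholo g (X l 0) (X l 1)⁆ = 0) := by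
    intro S hS
    induction hS using Submodule.span_induction with
    | mem x hx =>
      rcases hx with ⟨k, rfl⟩ | ⟨k, rfl⟩
      · exact ⟨fun l => by simp only [hABb, map_smul, hρVb, smul_zero],
          fun l => by simp only [hAAb, map_zero]⟩
      · exact ⟨fun l => by simp only [hBBb, map_zero],
          fun l => by simp only [hBAb, map_smul, hρbV, smul_zero]⟩
    | zero => simp
    | add x y _ _ hx hy => simp [add_lie, hx, hy]
    | smul c x _ hx => simp [smul_lie, hx]
  have hmA : ∀ l, antiholo g (X l 0) (X l 1) ∈ Submodule.span ℂ
          ((Set.range fun k => antiholo g (X k 0) (X k 1)) ∪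
            (Set.range fun k => holo g (X k 2) (X k 3))) :=
    fun l => Submodule.subset_span (Or.inl ⟨l, rfl⟩)
  have hmB : ∀ l, holo g (X l 2) (X l 3) ∈ Submodule.span ℂ
          ((Set.range fun k => antiholo g (X k 0) (X k 1)) ∪
            (Set.range fun k => holo g (X k 2) (X k 3))) :=
    fun l => Submodule.subset_span (Or.inr ⟨l, rfl⟩)
  have hvan : ∀ (f : (ℂ ⊗[ℝ] g) →ₗ[ℂ] ℂ) (S : ℂ ⊗[ℝ] g),
      (∀ l, f ⁅S, antiholo g (X l 0) (X l 1)⁆ = 0) → (∀ l, f ⁅S, holo g (X l 2) (X l 3)⁆ = 0) →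
      ∀ Y ∈ Submodule.span ℂ
          ((Set.range fun k => antiholo g (X k 0) (X k 1)) ∪
            (Set.range fun k => holo g (X k 2) (X k 3))), f ⁅S, Y⁆ = 0 := by
    intro f S h1 h2 Y hY
    induction hY using Submodule.span_induction with
    | mem x hx =>
      rcases hx with ⟨k, rfl⟩ | ⟨k, rfl⟩
      · exact h1 k
      · exact h2 k
    | zero => exact (congrArg f (lie_zero S)).trans (map_zero f)
    | add x y _ _ hx hy => exact (congrArg f (lie_add S x y)).trans (by rw [map_add, hx, hy, add_zero])
    | smul c x _ hx => exact (congrArg f (lie_smul c S x)).trans (by rw [map_smul, hx, smul_zero])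
  have hii : ∀ S ∈ Submodule.span ℂ
        ((Set.range fun k => holo g (X k 0) (X k 1)) ∪
          (Set.range fun k => antiholo g (X k 2) (X k 3))),
      ∀ T ∈ Submodule.span ℂ
        ((Set.range fun k => holo g (X k 0) (X k 1)) ∪
          (Set.range fun k => antiholo g (X k 2) (X k 3))),
      (∀ Y ∈ Submodule.span ℂ
          ((Set.range fun k => antiholo g (X k 0) (X k 1)) ∪
            (Set.range fun k => holo g (X k 2) (X k 3))),
        ρ ⁅S, Y⁆ = ρbar ⁅T, Y⁆) →
      (∀ Y ∈ Submodule.span ℂ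
          ((Set.range fun k => antiholo g (X k 0) (X k 1)) ∪
            (Set.range fun k => holo g (X k 2) (X k 3))),
        ρ ⁅S, Y⁆ = 0) := by
    intro S hSm T hT h
    exact hvan ρ S (fun l => (h _ (hmA l)).trans ((hS T hT).2 l)) (hS S hSm).1
  have hkerB : ∀ T ∈ Submodule.span ℂ (Set.range fun k => antiholo g (X k 2) (X k 3)),
      ∀ l, ρbar ⁅T, holo g (X l 2) (X l 3)⁆ = 0 := by
    intro T hT l
    induction hT using Submodule.span_induction with
    | mem x hx =>
      obtain ⟨k, rfl⟩ := hx
      simp only [hBBb, map_zero]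
    | zero => simp
    | add x y _ _ hx hy => simp [add_lie, hx, hy]
    | smul c x _ hx => simp [smul_lie, hx]
  have hiii : ∀ T ∈ Submodule.span ℂ
        ((Set.range fun k => holo g (X k 0) (X k 1)) ∪
          (Set.range fun k => antiholo g (X k 2) (X k 3))),
      ((∀ Y ∈ Submodule.span ℂ
          ((Set.range fun k => antiholo g (X k 0) (X k 1)) ∪
            (Set.range fun k => holo g (X k 2) (X k 3))),
        ρbar ⁅T, Y⁆ = 0) ↔
        T ∈ Submodule.span ℂ (Set.range fun k => antiholo g (X k 2) (X k 3))) := by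
    intro T hT
    constructor
    · intro h
      rw [Submodule.span_union] at hT
      obtain ⟨a, ha, c, hc, rfl⟩ := Submodule.mem_sup.1 hT
      obtain ⟨f, rfl⟩ := (Submodule.mem_span_range_iff_exists_fun ℂ).1 ha
      have hf : ∀ l, f l = 0 := by
        intro l
        have := h _ (hmB l)
        rw [add_lie, map_add, hkerB c hc l, sum_lie] at this
        simpa [smul_lie, hABb, hρbVb] using this
      simpa [hf] using hc
    · intro h
      exact hvan ρbar T (hS T hT).2 (hkerB T h)
  refine ⟨⟨hJJ, hJab⟩, ⟨hstep, ⟨X 0 0, X 0 2, ?_⟩, hcenter⟩, hii, hiii, ?_, ?_⟩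
  · rw [h13]; simp [hZ1ne]
  · intro T hT
    rw [← hiii T hT]
    constructor
    · rintro ⟨x, hx, h⟩ Y hY
      have h0 := hii (-x) (Submodule.neg_mem _ hx) T hT (fun Y hY => by
        rw [neg_lie, map_neg, h Y hY]) Y hY
      rw [neg_lie, map_neg] at h0
      rw [h Y hY, h0]
    · intro h
      exact ⟨0, Submodule.zero_mem _, fun Y hY => by rw [h Y hY]; simp⟩
  · rintro k ⟨x, hx, h⟩
    have := h _ (hmB k)
    rw [(hS x hx).1 k, hABb] at this
    simp [hρbVb] at this
end
end

section
/- Let W_{4n+6} be the real Lie algebra with basis {X_{4k+1}, X_{4k+2}, X_{4k+3}, X_{4k+4}, Z_1, Z_2 : 0 ≤ k ≤ n} and only non-zero brackets [X_{4k+1}, X_{4k+3}] = −(1/2)Z_1, [X_{4k+1}, X_{4k+4}] = −(1/2)Z_2, [X_{4k+2}, X_{4k+3}] = −(1/2)Z_2, [X_{4k+2}, X_{4k+4}] = (1/2)Z_1, with abelian complex structure J given by JX_{4k+1} = X_{4k+2}, JX_{4k+3} = −X_{4k+4}, JZ_1 = −Z_2, and set V = (Z_1 + iZ_2)/2, T_{2k+1}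 = (X_{4k+1} − iX_{4k+2})/2, T_{2k+2} = (X_{4k+3} + iX_{4k+4})/2. Then the space {X ∈ g^{1,0} : π^{1,0}([X, Ȳ]) = 0 for all Ȳ ∈ g^{0,1}} equals span_ℂ{V, T_1, T_3, …, T_{2n+1}} and has dimension n + 2. (This space is the invariant cohomology H^0(g^{1,0}) of holomorphic vector fields; together with dim H^1(g^{0,0}) = dim (g^{0,1})^* = 2n + 3, it gives dim H^1_Λ = 3n + 5 for Λ = V ∧ T with T in span_ℂ{T_2, T_4, …, T_{2n+2}}.) -/
open scoped TensorProduct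

noncomputable section

/-- The space `{X ∈ g^{1,0} : π^{1,0}([X, Ȳ]) = 0 for all Ȳ ∈ g^{0,1}}`, i.e. the kernel of
the Cauchy–Riemann operator on invariant `(1,0)`-vector fields (invariant holomorphic vector
fields); `π^{1,0} w = 0` is expressed as `w ∈ g^{0,1}`. -/
def holKer (g : Type) [LieRing g] [LieAlgebra ℝ g] (J : g →ₗ[ℝ] g) :
    Submodule ℂ (ℂ ⊗[ℝ] g) where
  carrier := {x | x ∈ eig g J Complex.I ∧
    ∀ Y ∈ eig g J (-Complex.I), ⁅x, Y⁆ ∈ eig g J (-Complex.I)}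
  add_mem' := by
    rintro a c ⟨ha1, ha2⟩ ⟨hc1, hc2⟩
    exact ⟨add_mem ha1 hc1, fun Y hY => by
      rw [add_lie]; exact add_mem (ha2 Y hY) (hc2 Y hY)⟩
  zero_mem' := ⟨zero_mem _, fun Y hY => by rw [zero_lie]; exact zero_mem _⟩
  smul_mem' := by
    rintro c a ⟨h1, h2⟩
    exact ⟨Submodule.smul_mem _ _ h1, fun Y hY => by
      rw [smul_lie]; exact Submodule.smul_mem _ _ (h2 Y hY)⟩

/-- For the Lie algebra `W_{4n+6}` with its abelian complex structure `J`
(notation as in Statement 15), the space `{X ∈ g^{1,0} : π^{1,0}([X, Ȳ]) = 0 ∀ Ȳ ∈ g^{0,1}}`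
of invariant holomorphic vector fields equals `span_ℂ{V, T_1, T_3, …, T_{2n+1}}` and has
dimension `n + 2`. -/
theorem statement16 (n : ℕ) (g : Type) [LieRing g] [LieAlgebra ℝ g]
    (X : Fin (n + 1) → Fin 4 → g) (Z1 Z2 : g)
    (b : Module.Basis ((Fin (n + 1) × Fin 4) ⊕ Fin 2) ℝ g)
    (hbX : ∀ k i, b (Sum.inl (k, i)) = X k i)
    (hbZ1 : b (Sum.inr 0) = Z1) (hbZ2 : b (Sum.inr 1) = Z2)
    (h13 : ∀ k, ⁅X k 0, X k 2⁆ = -(1/2 : ℝ) • Z1)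
    (h14 : ∀ k, ⁅X k 0, X k 3⁆ = -(1/2 : ℝ) • Z2)
    (h23 : ∀ k, ⁅X k 1, X k 2⁆ = -(1/2 : ℝ) • Z2)
    (h24 : ∀ k, ⁅X k 1, X k 3⁆ = (1/2 : ℝ) • Z1)
    (h12 : ∀ k, ⁅X k 0, X k 1⁆ = 0)
    (h34 : ∀ k, ⁅X k 2, X k 3⁆ = 0)
    (hcross : ∀ k l, k ≠ l → ∀ i i', ⁅X k i, X l i'⁆ = 0)
    (hZ1c : ∀ k i, ⁅X k i, Z1⁆ = 0) (hZ2c : ∀ k i, ⁅X k i, Z2⁆ = 0)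
    (hZZ : ⁅Z1, Z2⁆ = 0)
    (J : g →ₗ[ℝ] g)
    (hJ1 : ∀ k, J (X k 0) = X k 1) (hJ2' : ∀ k, J (X k 1) = -X k 0)
    (hJ3 : ∀ k, J (X k 2) = -X k 3) (hJ4 : ∀ k, J (X k 3) = X k 2)
    (hJZ1 : J Z1 = -Z2) (hJZ2 : J Z2 = Z1) :
    holKer g J = Submodule.span ℂ
      ({antiholo g Z1 Z2} ∪ (Set.range fun k => holo g (X k 0) (X k 1))) ∧
    Module.finrank ℂ (holKer g J) = n + 2 := by
  classical
  set B := b.baseChange ℂ with hB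
  have eX : ∀ k i, B (Sum.inl (k, i)) = (1 : ℂ) ⊗ₜ[ℝ] X k i := by
    intro k i; rw [hB, Module.Basis.baseChange_apply, hbX]
  have eZ1 : B (Sum.inr 0) = (1 : ℂ) ⊗ₜ[ℝ] Z1 := by
    rw [hB, Module.Basis.baseChange_apply, hbZ1]
  have eZ2 : B (Sum.inr 1) = (1 : ℂ) ⊗ₜ[ℝ] Z2 := by
    rw [hB, Module.Basis.baseChange_apply, hbZ2]
  have tm : ∀ (a : ℂ) (x : g), a ⊗ₜ[ℝ] x = a • ((1 : ℂ) ⊗ₜ[ℝ] x) := by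
    intro a x; rw [TensorProduct.smul_tmul']; simp
  have hV : antiholo g Z1 Z2 =
      (1 / 2 : ℂ) • B (Sum.inr 0) + (Complex.I / 2) • B (Sum.inr 1) := by
    rw [antiholo, tm, tm (Complex.I / 2), eZ1, eZ2]
  have hT : ∀ k, holo g (X k 0) (X k 1) =
      (1 / 2 : ℂ) • B (Sum.inl (k, 0)) - (Complex.I / 2) • B (Sum.inl (k, 1)) := by
    intro k
    rw [holo, tm, tm (Complex.I / 2), eX, eX]
  have r : ∀ (a : ℝ) (x : g), (1 : ℂ) ⊗ₜ[ℝ] (a • x) = (a : ℂ) • ((1 : ℂ) ⊗ₜ[ℝ] x) := by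
    intro a x
    rw [← TensorProduct.smul_tmul, ← tm]
    simp
  -- action of J on the basis
  set K := J.baseChange ℂ with hK
  have K0 : ∀ k, K (B (Sum.inl (k, 0))) = B (Sum.inl (k, 1)) := by
    intro k; rw [eX, eX, hK, LinearMap.baseChange_tmul, hJ1]
  have K1 : ∀ k, K (B (Sum.inl (k, 1))) = - B (Sum.inl (k, 0)) := by
    intro k; rw [eX, eX, hK, LinearMap.baseChange_tmul, hJ2', TensorProduct.tmul_neg]
  have K2 : ∀ k, K (B (Sum.inl (k, 2))) = - B (Sum.inl (k, 3)) := by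
    intro k; rw [eX, eX, hK, LinearMap.baseChange_tmul, hJ3, TensorProduct.tmul_neg]
  have K3 : ∀ k, K (B (Sum.inl (k, 3))) = B (Sum.inl (k, 2)) := by
    intro k; rw [eX, eX, hK, LinearMap.baseChange_tmul, hJ4]
  have KZ1 : K (B (Sum.inr 0)) = - B (Sum.inr 1) := by
    rw [eZ1, eZ2, hK, LinearMap.baseChange_tmul, hJZ1, TensorProduct.tmul_neg]
  have KZ2 : K (B (Sum.inr 1)) = B (Sum.inr 0) := by
    rw [eZ1, eZ2, hK, LinearMap.baseChange_tmul, hJZ2]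
  have memE : ∀ c x, x ∈ eig g J c ↔ K x = c • x := fun c x => Iff.rfl
  -- brackets on the basis
  have br : ∀ x y : g, ⁅(1 : ℂ) ⊗ₜ[ℝ] x, (1 : ℂ) ⊗ₜ[ℝ] y⁆ = (1 : ℂ) ⊗ₜ[ℝ] ⁅x, y⁆ := by
    intro x y; rw [LieAlgebra.ExtendScalars.bracket_tmul, one_mul]
  have b02 : ∀ k, ⁅B (Sum.inl (k, 0)), B (Sum.inl (k, 2))⁆ = (-(1/2) : ℂ) • B (Sum.inr 0) := by
    intro k; rw [eX, eX, br, h13, r, eZ1]; norm_num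
  have b03 : ∀ k, ⁅B (Sum.inl (k, 0)), B (Sum.inl (k, 3))⁆ = (-(1/2) : ℂ) • B (Sum.inr 1) := by
    intro k; rw [eX, eX, br, h14, r, eZ2]; norm_num
  have b12 : ∀ k, ⁅B (Sum.inl (k, 1)), B (Sum.inl (k, 2))⁆ = (-(1/2) : ℂ) • B (Sum.inr 1) := by
    intro k; rw [eX, eX, br, h23, r, eZ2]; norm_num
  have b13 : ∀ k, ⁅B (Sum.inl (k, 1)), B (Sum.inl (k, 3))⁆ = ((1/2) : ℂ) • B (Sum.inr 0) := by
    intro k; rw [eX, eX, br, h24, r, eZ1]; norm_num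
  have b01 : ∀ k, ⁅B (Sum.inl (k, 0)), B (Sum.inl (k, 1))⁆ = 0 := by
    intro k; rw [eX, eX, br, h12, TensorProduct.tmul_zero]
  have b10 : ∀ k, ⁅B (Sum.inl (k, 1)), B (Sum.inl (k, 0))⁆ = 0 := by
    intro k; rw [← lie_skew, b01, neg_zero]
  have bc : ∀ k l, k ≠ l → ∀ i j, ⁅B (Sum.inl (k, i)), B (Sum.inl (l, j))⁆ = 0 := by
    intro k l h i j; rw [eX, eX, br, hcross k l h, TensorProduct.tmul_zero]
  have bZ1 : ∀ k i, ⁅B (Sum.inl (k, i)), B (Sum.inr 0)⁆ = 0 := by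
    intro k i; rw [eX, eZ1, br, hZ1c, TensorProduct.tmul_zero]
  have bZ2 : ∀ k i, ⁅B (Sum.inl (k, i)), B (Sum.inr 1)⁆ = 0 := by
    intro k i; rw [eX, eZ2, br, hZ2c, TensorProduct.tmul_zero]
  have bZ1' : ∀ k i, ⁅B (Sum.inr 0), B (Sum.inl (k, i))⁆ = 0 := by
    intro k i; rw [← lie_skew, bZ1, neg_zero]
  have bZ2' : ∀ k i, ⁅B (Sum.inr 1), B (Sum.inl (k, i))⁆ = 0 := by
    intro k i; rw [← lie_skew, bZ2, neg_zero]
  have bZZ : ⁅B (Sum.inr 0), B (Sum.inr 1)⁆ = 0 := by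
    rw [eZ1, eZ2, br, hZZ, TensorProduct.tmul_zero]
  have bZZ' : ⁅B (Sum.inr 1), B (Sum.inr 0)⁆ = 0 := by
    rw [← lie_skew, bZZ, neg_zero]
  have I2 : Complex.I * Complex.I = -1 := Complex.I_mul_I
  have IS : ∀ v : ℂ ⊗[ℝ] g, (Complex.I * Complex.I) • v = (-1 : ℂ) • v := by
    intro v; rw [I2]
  have sl : ∀ (t : ℂ) (x y : ℂ ⊗[ℝ] g), ⁅t • x, y⁆ = t • ⁅x, y⁆ := fun t x y => smul_lie t x y
  have ls : ∀ (t : ℂ) (x y : ℂ ⊗[ℝ] g), ⁅x, t • y⁆ = t • ⁅x, y⁆ := fun t x y => lie_smul t x y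
  have al : ∀ (x y z : ℂ ⊗[ℝ] g), ⁅x + y, z⁆ = ⁅x, z⁆ + ⁅y, z⁆ := fun x y z => add_lie x y z
  have sbl : ∀ (x y z : ℂ ⊗[ℝ] g), ⁅x - y, z⁆ = ⁅x, z⁆ - ⁅y, z⁆ := fun x y z => sub_lie x y z
  have la : ∀ (x y z : ℂ ⊗[ℝ] g), ⁅x, y + z⁆ = ⁅x, y⁆ + ⁅x, z⁆ := fun x y z => lie_add x y z
  have lsum : ∀ (x : ℂ ⊗[ℝ] g) (f : (Fin (n + 1) × Fin 4) ⊕ Fin 2 → ℂ ⊗[ℝ] g),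
      ⁅x, ∑ j, f j⁆ = ∑ j, ⁅x, f j⁆ := fun x f => lie_sum _ f x
  have suml : ∀ (f : Fin (n + 1) → ℂ ⊗[ℝ] g) (x : ℂ ⊗[ℝ] g),
      ⁅∑ j, f j, x⁆ = ∑ j, ⁅f j, x⁆ := fun f x => sum_lie _ f x
  have lself : ∀ (x : ℂ ⊗[ℝ] g), ⁅x, x⁆ = 0 := fun x => lie_self x
  -- reduce the bracket condition to the basis
  have red : ∀ x : ℂ ⊗[ℝ] g, (∀ j, ⁅x, B j⁆ ∈ eig g J (-Complex.I)) →
      ∀ Y : ℂ ⊗[ℝ] g, ⁅x, Y⁆ ∈ eig g J (-Complex.I) := by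
    intro x h Y
    rw [← B.sum_repr Y, lsum]
    refine Submodule.sum_mem _ fun j _ => ?_
    rw [ls]
    exact Submodule.smul_mem _ _ (h j)
  have VK : antiholo g Z1 Z2 ∈ holKer g J := by
    refine ⟨?_, fun Y _ => red _ ?_ Y⟩
    · rw [memE, hV]
      simp only [map_add, map_smul, KZ1, KZ2]
      linear_combination (norm := module) (-(1/2 : ℂ)) • IS (B (Sum.inr 1))
    · rintro (⟨k, i⟩ | i)
      · rw [hV, al, sl, sl, bZ1', bZ2']; simp
      · fin_cases i
        · simp [hV, al, sl, lself, bZZ']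
        · simp [hV, al, sl, lself, bZZ]
  have VbK : ∀ c : ℂ, c • (B (Sum.inr 0) - Complex.I • B (Sum.inr 1)) ∈ eig g J (-Complex.I) := by
    intro c
    refine Submodule.smul_mem _ _ ?_
    rw [memE]
    simp only [map_sub, map_smul, KZ1, KZ2]
    linear_combination (norm := module) (-1 : ℂ) • IS (B (Sum.inr 1))
  have TK : ∀ k, holo g (X k 0) (X k 1) ∈ holKer g J := by
    intro k
    refine ⟨?_, fun Y _ => red _ ?_ Y⟩
    · rw [memE, hT]
      simp only [map_sub, map_smul, K0, K1]
      linear_combination (norm := module) ((1/2 : ℂ)) • IS (B (Sum.inl (k, 1)))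
    · rintro (⟨l, i⟩ | i)
      · by_cases hkl : k = l
        · subst hkl
          rw [hT, sbl, sl, sl]
          fin_cases i
          · simp [b10, lself]
          · simp [b01, lself]
          · convert VbK (-(1/4)) using 1
            simp only [Fin.reduceFinMk, b02, b12]
            module
          · convert VbK (-(Complex.I/4)) using 1
            simp only [Fin.reduceFinMk, b03, b13]
            linear_combination (norm := module) (-(1/4 : ℂ)) • IS (B (Sum.inr 1))
        · rw [hT, sbl, sl, sl, bc k l hkl, bc k l hkl]; simp
      · fin_cases i
        · simp [hT, sbl, sl, bZ1]
        · simp [hT, sbl, sl, bZ2]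
  have main : holKer g J = Submodule.span ℂ
      ({antiholo g Z1 Z2} ∪ (Set.range fun k => holo g (X k 0) (X k 1))) := by
    apply le_antisymm
    · rintro x ⟨hx, hxY⟩
      rw [memE] at hx
      have c1 : ∀ k, B.coord (Sum.inl (k, 1)) ∘ₗ K = B.coord (Sum.inl (k, 0)) := by
        intro k
        refine B.ext ?_
        rintro (⟨l, i⟩ | i) <;> fin_cases i <;>
          simp [K0, K1, K2, K3, KZ1, KZ2, Finsupp.single_apply]
      have c3 : ∀ k, B.coord (Sum.inl (k, 3)) ∘ₗ K = - B.coord (Sum.inl (k, 2)) := by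
        intro k
        refine B.ext ?_
        rintro (⟨l, i⟩ | i) <;> fin_cases i <;>
          simp [K0, K1, K2, K3, KZ1, KZ2, Finsupp.single_apply]
      have cZ : B.coord (Sum.inr 1) ∘ₗ K = - B.coord (Sum.inr 0) := by
        refine B.ext ?_
        rintro (⟨l, i⟩ | i) <;> fin_cases i <;>
          simp [K0, K1, K2, K3, KZ1, KZ2, Finsupp.single_apply]
      have d1 : ∀ k, B.repr x (Sum.inl (k, 1)) = -Complex.I * B.repr x (Sum.inl (k, 0)) := by
        intro k
        have := LinearMap.congr_fun (c1 k) x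
        simp [hx] at this
        rw [← this]
        linear_combination (B.repr x (Sum.inl (k, 1))) * I2
      have d3 : ∀ k, B.repr x (Sum.inl (k, 3)) = Complex.I * B.repr x (Sum.inl (k, 2)) := by
        intro k
        have := LinearMap.congr_fun (c3 k) x
        simp [hx] at this
        linear_combination (B.repr x (Sum.inl (k, 3))) * I2 - Complex.I * this
      have dZ : B.repr x (Sum.inr 1) = Complex.I * B.repr x (Sum.inr 0) := by
        have := LinearMap.congr_fun cZ x
        simp [hx] at this
        linear_combination (B.repr x (Sum.inr 1)) * I2 - Complex.I * this
      have xs := B.sum_repr x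
      rw [Fintype.sum_sum_type, Fintype.sum_prod_type] at xs
      simp only [Fin.sum_univ_four, Fin.sum_univ_two, d1, d3, dZ] at xs
      have b20 : ∀ k, ⁅B (Sum.inl (k, 2)), B (Sum.inl (k, 0))⁆ = ((1/2) : ℂ) • B (Sum.inr 0) := by
        intro k; rw [← lie_skew, b02]; module
      have b30 : ∀ k, ⁅B (Sum.inl (k, 3)), B (Sum.inl (k, 0))⁆ = ((1/2) : ℂ) • B (Sum.inr 1) := by
        intro k; rw [← lie_skew, b03]; module
      have b21 : ∀ k, ⁅B (Sum.inl (k, 2)), B (Sum.inl (k, 1))⁆ = ((1/2) : ℂ) • B (Sum.inr 1) := by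
        intro k; rw [← lie_skew, b12]; module
      have b31 : ∀ k, ⁅B (Sum.inl (k, 3)), B (Sum.inl (k, 1))⁆ = (-(1/2) : ℂ) • B (Sum.inr 0) := by
        intro k; rw [← lie_skew, b13]; module
      have d2 : ∀ k, B.repr x (Sum.inl (k, 2)) = 0 := by
        intro k
        have hY : B (Sum.inl (k, 0)) + Complex.I • B (Sum.inl (k, 1)) ∈ eig g J (-Complex.I) := by
          rw [memE]
          simp only [map_add, map_smul, K0, K1]
          linear_combination (norm := module) ((1 : ℂ)) • IS (B (Sum.inl (k, 1)))
        have h := hxY _ hY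
        have e : ⁅x, B (Sum.inl (k, 0)) + Complex.I • B (Sum.inl (k, 1))⁆ =
            B.repr x (Sum.inl (k, 2)) • (B (Sum.inr 0) + Complex.I • B (Sum.inr 1)) := by
          conv_lhs => rw [← xs]
          rw [al, suml, Finset.sum_eq_single k]
          · simp only [al, la, sl, ls, bZ1', bZ2', b20, b30, b21, b31,
              b01, b10, lself]
            linear_combination (norm := module) (-(1/2 : ℂ) * B.repr x (Sum.inl (k, 2))) •
              IS (B (Sum.inr 0))
          · intro l _ hl
            simp only [al, la, sl, ls, bc l k hl]
            simp
          · simp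
        rw [e, memE] at h
        simp only [map_add, map_smul, KZ1, KZ2] at h
        have h2 := congrArg (fun t => B.repr t (Sum.inr 0)) h
        simp at h2
        have h3 : 2 * Complex.I * B.repr x (Sum.inl (k, 2)) = 0 := by
          linear_combination h2
        simpa using h3
      rw [← xs]
      refine Submodule.add_mem _ (Submodule.sum_mem _ fun k _ => ?_) ?_
      · have : holo g (X k 0) (X k 1) ∈ Submodule.span ℂ
          ({antiholo g Z1 Z2} ∪ (Set.range fun k => holo g (X k 0) (X k 1))) :=
          Submodule.subset_span (Or.inr ⟨k, rfl⟩)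
        convert Submodule.smul_mem _ (2 * B.repr x (Sum.inl (k, 0))) this using 1
        rw [hT, d2]
        module
      · have : antiholo g Z1 Z2 ∈ Submodule.span ℂ
          ({antiholo g Z1 Z2} ∪ (Set.range fun k => holo g (X k 0) (X k 1))) :=
          Submodule.subset_span (Or.inl rfl)
        convert Submodule.smul_mem _ (2 * B.repr x (Sum.inr 0)) this using 1
        rw [hV]
        module
    · rw [Submodule.span_le]
      rintro _ (rfl | ⟨k, rfl⟩)
      · exact VK
      · exact TK k
  refine ⟨main, ?_⟩
  rw [main]
  let f : Unit ⊕ Fin (n + 1) → ℂ ⊗[ℝ] g :=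
    Sum.elim (fun _ => antiholo g Z1 Z2) (fun k => holo g (X k 0) (X k 1))
  have hf : Set.range f =
      {antiholo g Z1 Z2} ∪ (Set.range fun k => holo g (X k 0) (X k 1)) := by
    rw [Set.Sum.elim_range, Set.range_const]
  have li : LinearIndependent ℂ f := by
    rw [Fintype.linearIndependent_iff]
    intro c hc
    rw [Fintype.sum_sum_type] at hc
    simp only [f, Sum.elim_inl, Sum.elim_inr, hV, hT] at hc
    rintro (u | k)
    · have := congrArg (fun t => B.repr t (Sum.inr 0)) hc
      simpa [Finsupp.single_apply] using this
    · have := congrArg (fun t => B.repr t (Sum.inl (k, 0))) hc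
      simpa [Finsupp.single_apply] using this
  rw [← hf, finrank_span_eq_card li]
  simp
  ring
end
end
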